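/- arXiv:2311.03248 — 4 statements merged into one kernel-verified Lean document; each statement's English description precedes it below -/
import Mathlib

section
/- For all integers n ≥ 0 and t ≥ 0 and for each α ∈ {14, 18}, B_5^{(20t+9)}(20n + α) ≡ 0 (mod 10). -/
/-!
Write `f_k = ∏_{m ≥ 1} (1 - q^{km})`. The generating function of `B 5 r` is `(f₅/f₁)^r`
(`cast_B_eq_coeff`, `regSeries_mul_pentagonal`), and `f₁` is Euler's pentagonal series, called
`pentagonalSeries` in Mathlib. With `r = 20t + 9`, the moduli 5 and 2 are treated separately.

Modulo 5, `f₅ = f₁⁵`, so `(f₅/f₁)^r = f₁^{4r}` is a series in `q⁵` times `f₁`. Pentagonal numbers are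
never 3 or 4 modulo 5, so the coefficients at such exponents vanish; 14 and 18 are of this kind
(`coeff_regSeries_pow_mod_five`).

Modulo 2, `(f₅/f₁)^r` is a series in `q⁴` times `f₁³ f₅`, and it suffices that the coefficients of
`f₁³ f₅` at exponents `n ≡ 2 (mod 4)` vanish. Gauss's identity, obtained from Shanks' telescoping
finite version (`gauss_finite`), gives `f₁³ = ∑ q^{k(k+1)/2}` modulo 2 (`triSeries_eq_pow`). The
coefficient therefore counts solutions of `3x² + 5y² = 24n + 8` in odd `x`, `y` up to signs. When
`n ≡ 2 (mod 4)` these correspond to representations `3n + 1 = u² + 15v²` via `x = u + 5v`,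
`y = u - 3v`, and changing the sign of `u` is a fixed-point-free involution (`card_solSet`).
-/

/-- `B ℓ r n` is the number of `ℓ`-regular `r`-multipartitions of `n`:
ordered `r`-tuples `(λ⁽¹⁾, …, λ⁽ʳ⁾)` of partitions, none of whose parts is
divisible by `ℓ`, whose sizes sum to `n`. -/
def B (ℓ r n : ℕ) : ℕ :=
  Fintype.card {f : Fin r → Σ a : Fin (n + 1), Nat.Partition a //
    (∑ i, ((f i).1 : ℕ)) = n ∧ ∀ i, ∀ part ∈ (f i).2.parts, ¬ ℓ ∣ part}

open PowerSeries Finset Nat.Partition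

/-! ### Generating functions -/

/-- The generating function `f₅/f₁` of `5`-regular partitions. -/
noncomputable def regSeries (R : Type*) [CommRing R] : R⟦X⟧ :=
  PowerSeries.mk fun n ↦ (#(restricted n (¬ 5 ∣ ·)) : R)

lemma card_sigma_fiber (n a : ℕ) (ha : a ≤ n) :
    #{s : Σ a : Fin (n + 1), Nat.Partition a | (s.1 : ℕ) = a ∧ ∀ part ∈ s.2.parts, ¬ 5 ∣ part}
      = #(restricted a (¬ 5 ∣ ·)) := by
  symm
  refine Finset.card_bij (fun p _ ↦ ⟨⟨a, by omega⟩, p⟩) ?_ ?_ ?_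
  · intro p hp
    simpa [restricted] using hp
  · intro p _ q _ h
    simpa using h
  · rintro ⟨⟨b, hb⟩, p⟩ h
    simp only [mem_filter, mem_univ, true_and] at h
    obtain ⟨rfl, h⟩ := h
    exact ⟨p, by simpa [restricted] using h, rfl⟩

lemma cast_B_eq_coeff (R : Type*) [CommRing R] (r n : ℕ) :
    (B 5 r n : R) = coeff n (regSeries R ^ r) := by
  classical
  have hpow : regSeries R ^ r = ∏ _i : Fin r, regSeries R := by simp
  rw [hpow, coeff_prod, B, Fintype.card_subtype,
    Finset.card_eq_sum_card_fiberwise (t := finsuppAntidiag (univ : Finset (Fin r)) n)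
      (f := fun f ↦ Finsupp.equivFunOnFinite.symm fun i ↦ ((f i).1 : ℕ))]
  · push_cast
    refine Finset.sum_congr rfl fun l hl ↦ ?_
    have hl' : ∑ i, l i = n := by simpa using hl
    have hle : ∀ i, l i ≤ n := fun i ↦
      hl' ▸ Finset.single_le_sum (f := fun i ↦ l i) (fun _ _ ↦ Nat.zero_le _) (mem_univ i)
    simp only [regSeries, coeff_mk]
    rw [← Nat.cast_prod]
    congr 1
    rw [← Finset.prod_congr rfl fun i _ ↦ card_sigma_fiber n (l i) (hle i),
      ← Fintype.card_piFinset]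
    congr 1
    ext f
    simp only [mem_filter, mem_univ, true_and, Fintype.mem_piFinset]
    constructor
    · rintro ⟨⟨_, h⟩, rfl⟩ i
      exact ⟨by simp, h i⟩
    · intro h
      refine ⟨⟨?_, fun i ↦ (h i).2⟩, ?_⟩
      · exact (Finset.sum_congr rfl fun i _ ↦ (h i).1).trans hl'
      · ext i
        simp [(h i).1]
  · intro f hf
    simp only [coe_filter, Set.mem_ofPred_eq, mem_univ, true_and] at hf
    simpa using hf.1

open WithPiTopology in
lemma hasProd_expand_pentagonal (R : Type*) [CommRing R] [TopologicalSpace R] (m : ℕ)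
    (hm : m ≠ 0) :
    HasProd (fun i : ℕ ↦ (1 - X ^ ((i + 1) * m) : R⟦X⟧)) (expand m hm (pentagonalSeries R)) := by
  have hc : Continuous (expand m hm : R⟦X⟧ → R⟦X⟧) := by
    rw [continuous_iff_continuousAt]
    intro f
    rw [ContinuousAt, tendsto_iff_coeff_tendsto]
    intro d
    simp only [coeff_expand]
    split_ifs
    · exact (continuous_coeff R (d / m)).tendsto f
    · exact tendsto_const_nhds
  have := (hasProd_one_sub_X_pow R).map (expand m hm) hc
  convert this using 2 with i
  simp [← pow_mul, mul_comm]

open WithPiTopology in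
/-- `(f₅ / f₁) · f₁ = f₅`. -/
lemma regSeries_mul_pentagonal (R : Type*) [CommRing R] [IsDomain R] :
    regSeries R * pentagonalSeries R = expand 5 (by norm_num) (pentagonalSeries R) := by
  let _ : TopologicalSpace R := ⊥
  have _ : DiscreteTopology R := ⟨rfl⟩
  have h5 : (0 : ℕ) < 5 := by norm_num
  rw [regSeries, powerSeriesMk_card_restricted_eq_powerSeriesMk_card_countRestricted R h5]
  have h := (hasProd_powerSeriesMk_card_countRestricted R h5).mul
    (hasProd_one_sub_X_pow R)
  refine h.unique ?_
  convert hasProd_expand_pentagonal R 5 (by norm_num) using 2 with i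
  · rfl
  · simp_rw [pow_mul, geom_sum_mul_neg]

/-- Frobenius: over `𝔽_p`, `f(q)^p = f(q^p)`. -/
lemma expand_eq_pow (p : ℕ) [Fact p.Prime] (hp : p ≠ 0) (f : (ZMod p)⟦X⟧) :
    expand p hp f = f ^ p := by
  have h := MvPowerSeries.map_frobenius_expand p hp (R := ZMod p) (f := f)
  rw [ZMod.frobenius_zmod, MvPowerSeries.map_id] at h
  exact h

lemma coeff_expand_mul_eq_zero {R : Type*} [CommRing R] (m : ℕ) (hm : m ≠ 0) (W F : R⟦X⟧) (n : ℕ)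
    (hF : ∀ b, b % m = n % m → coeff b F = 0) : coeff n (expand m hm W * F) = 0 := by
  rw [coeff_mul]
  refine Finset.sum_eq_zero fun p hp ↦ ?_
  rw [HasAntidiagonal.mem_antidiagonal] at hp
  by_cases h : m ∣ p.1
  · rw [hF p.2, mul_zero]
    obtain ⟨c, hc⟩ := h
    rw [← hp, hc, Nat.mul_add_mod]
  · rw [coeff_expand_of_not_dvd _ _ _ h, zero_mul]

lemma pentagonal_ne_zero (R : Type*) [CommRing R] [Nontrivial R] : pentagonalSeries R ≠ 0 := by
  intro h
  have := coeff_pentagonalSeries_pentagonal R 0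
  simp [h] at this

/-- Over `𝔽₅` one has `f₅/f₁ = f₁⁴`, so the power equals a series in `q⁵` times `f₁`, and pentagonal
numbers are `0`, `1` or `2` modulo 5. -/
lemma coeff_regSeries_pow_mod_five (t n : ℕ) (hn : n % 5 = 3 ∨ n % 5 = 4) :
    coeff n (regSeries (ZMod 5) ^ (20 * t + 9)) = 0 := by
  have : Fact (Nat.Prime 5) := ⟨by norm_num⟩
  set f := pentagonalSeries (ZMod 5) with hf
  have hG : regSeries (ZMod 5) = f ^ 4 := by
    apply mul_right_cancel₀ (pentagonal_ne_zero (ZMod 5))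
    rw [regSeries_mul_pentagonal, expand_eq_pow, ← hf]
    ring
  have hpow : regSeries (ZMod 5) ^ (20 * t + 9) =
      expand 5 (by norm_num) (f ^ (16 * t + 7)) * f := by
    rw [expand_eq_pow, hG]
    ring
  rw [hpow]
  refine coeff_expand_mul_eq_zero _ _ _ _ _ fun b hb ↦ ?_
  apply coeff_pentagonalSeries_eq_zero
  rintro ⟨k, hk⟩
  have h2 := two_mul_natCast_pentagonal k
  rw [hk] at h2
  have h3 : (2 * (b : ℤ)) % 5 = (k * (3 * k - 1)) % 5 := by rw [h2]
  have h4 : k % 5 = 0 ∨ k % 5 = 1 ∨ k % 5 = 2 ∨ k % 5 = 3 ∨ k % 5 = 4 := by omega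
  rcases h4 with h | h | h | h | h <;> simp [Int.mul_emod, Int.sub_emod, h] at h3 <;> omega

/-! ### Gauss's identity for triangular numbers -/

section Gauss
variable (K : Type*) [Field K]

/-- `∏_{i=1}^n (1 - q^{2i}) / (1 - q^{2i-1})`. -/
noncomputable def gaussProd (n : ℕ) : K⟦X⟧ :=
  ∏ i ∈ range n, ((1 - X ^ (2 * i + 2)) * (1 - X ^ (2 * i + 1))⁻¹)

/-- The inverse of `gaussProd`. -/
noncomputable def gaussProdInv (n : ℕ) : K⟦X⟧ :=
  ∏ i ∈ range n, ((1 - X ^ (2 * i + 1)) * (1 - X ^ (2 * i + 2))⁻¹)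

lemma one_sub_X_pow_mul_inv (m : ℕ) :
    (1 - X ^ (m + 1) : K⟦X⟧) * (1 - X ^ (m + 1))⁻¹ = 1 :=
  PowerSeries.mul_inv_cancel _ (by simp)

lemma gaussProd_mul_inv (n : ℕ) : gaussProd K n * gaussProdInv K n = 1 := by
  rw [gaussProd, gaussProdInv, ← Finset.prod_mul_distrib]
  refine Finset.prod_eq_one fun i _ ↦ ?_
  linear_combination (1 - X ^ (2 * i + 1) : K⟦X⟧) * (1 - X ^ (2 * i + 1))⁻¹ *
    one_sub_X_pow_mul_inv K (2 * i + 1) + one_sub_X_pow_mul_inv K (2 * i)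

lemma gaussProd_succ (n : ℕ) :
    gaussProd K (n + 1) * (1 - X ^ (2 * n + 1)) = gaussProd K n * (1 - X ^ (2 * n + 2)) := by
  rw [gaussProd, Finset.prod_range_succ, ← gaussProd]
  linear_combination gaussProd K n * (1 - X ^ (2 * n + 2)) * one_sub_X_pow_mul_inv K (2 * n)

lemma gaussProdInv_succ (n : ℕ) :
    gaussProdInv K (n + 1) * (1 - X ^ (2 * n + 2)) = gaussProdInv K n * (1 - X ^ (2 * n + 1)) := by
  rw [gaussProdInv, Finset.prod_range_succ, ← gaussProdInv]
  linear_combination gaussProdInv K n * (1 - X ^ (2 * n + 1)) *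
    one_sub_X_pow_mul_inv K (2 * n + 1)

/-- The summand on the left is a difference of consecutive values of the right-hand side. -/
lemma gauss_telescope (n m : ℕ) :
    (∑ s ∈ range m, gaussProd K (n + 1) * gaussProdInv K s * X ^ (s * (2 * n + 3)) -
      ∑ s ∈ range m, gaussProd K n * gaussProdInv K s * X ^ (s * (2 * n + 1))) *
      (1 - X ^ (2 * n + 1)) =
    gaussProd K n * gaussProdInv K m * X ^ (m * (2 * n + 1)) * (1 - X ^ (2 * m)) := by
  induction m with
  | zero => simp
  | succ m ih =>
    rw [Finset.sum_range_succ, Finset.sum_range_succ]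
    linear_combination ih +
      gaussProdInv K m * X ^ (m * (2 * n + 3)) * gaussProd_succ K n -
      gaussProd K n * X ^ ((m + 1) * (2 * n + 1)) * gaussProdInv_succ K m

/-- Shanks' finite form of Gauss's identity `∏ (1 - q^{2i}) / (1 - q^{2i-1}) = ∑ q^{s(s+1)/2}`: the
term `s = 0` on the left is the finite product, the others are `O(q^{2n+1})`. -/
lemma gauss_finite (n : ℕ) :
    ∑ s ∈ range n, gaussProd K n * gaussProdInv K s * X ^ (s * (2 * n + 1)) =
      ∑ s ∈ range (2 * n), (X ^ (s * (s + 1) / 2) : K⟦X⟧) := by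
  induction n with
  | zero => simp
  | succ n ih =>
    have e1 : 2 * n * (2 * n + 1) / 2 = n * (2 * n + 1) := by
      rw [mul_assoc, Nat.mul_div_cancel_left _ (by norm_num)]
    have e2 : (2 * n + 1) * (2 * n + 1 + 1) / 2 = (n + 1) * (2 * n + 1) := by
      rw [show (2 * n + 1) * (2 * n + 1 + 1) = 2 * ((n + 1) * (2 * n + 1)) by ring,
        Nat.mul_div_cancel_left _ (by norm_num)]
    rw [show 2 * (n + 1) = 2 * n + 1 + 1 by ring, Finset.sum_range_succ _ (2 * n + 1),
      Finset.sum_range_succ _ (2 * n), ← ih, e1, e2]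
    have hne : (1 - X ^ (2 * n + 1) : K⟦X⟧) ≠ 0 := by
      intro h
      simpa using congrArg constantCoeff h
    apply mul_right_cancel₀ hne
    have ht := gauss_telescope K n (n + 1)
    rw [Finset.sum_range_succ (fun s ↦ gaussProd K n * gaussProdInv K s * X ^ (s * (2 * n + 1)))]
      at ht
    have h1 := gaussProd_mul_inv K n
    have h2 := gaussProdInv_succ K n
    rw [show 2 * n + 1 + 1 + 1 = 2 * n + 3 by ring]
    linear_combination ht + gaussProd K n * X ^ ((n + 1) * (2 * n + 1)) * h2 +
      (X ^ ((n + 1) * (2 * n + 1)) + X ^ (n * (2 * n + 1))) * (1 - X ^ (2 * n + 1)) * h1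

open Classical in
/-- `∑_{k ≥ 0} q^{k(k+1)/2}`. -/
noncomputable def triSeries : K⟦X⟧ :=
  PowerSeries.mk fun n ↦ if ∃ k : ℕ, k * (k + 1) / 2 = n then 1 else 0

lemma tri_injective : Function.Injective fun k : ℕ ↦ k * (k + 1) / 2 := by
  refine StrictMono.injective (strictMono_nat_of_lt_succ fun n ↦ ?_)
  have : (n + 1) * (n + 1 + 1) = n * (n + 1) + (n + 1) * 2 := by ring
  rw [this, Nat.add_mul_div_right _ _ (by norm_num)]
  omega

lemma coeff_gaussProd (n d : ℕ) (hd : d < 2 * n) :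
    coeff d (gaussProd K n) = coeff d (triSeries K) := by
  have h := gauss_finite K n
  obtain ⟨n, rfl⟩ : ∃ k, n = k + 1 := ⟨n - 1, by omega⟩
  rw [Finset.sum_range_succ'] at h
  have h0 : gaussProdInv K 0 = 1 := by simp [gaussProdInv]
  simp only [h0, zero_mul, pow_zero, mul_one] at h
  have h1 := congrArg (coeff d) h
  rw [map_add, map_sum, Finset.sum_eq_zero, zero_add] at h1
  · rw [h1, map_sum, triSeries, coeff_mk]
    simp only [coeff_X_pow]
    split_ifs with hk
    · obtain ⟨k, rfl⟩ := hk
      rw [Finset.sum_eq_single k]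
      · simp
      · intro b _ hb
        rw [if_neg]
        exact fun h ↦ hb (tri_injective h.symm)
      · intro hk
        exfalso
        apply hk
        rw [mem_range]
        refine lt_of_le_of_lt ?_ hd
        rw [Nat.le_div_iff_mul_le (by norm_num)]
        rcases k with _ | k
        · simp
        · nlinarith
    · refine Finset.sum_eq_zero fun b _ ↦ if_neg fun h ↦ hk ⟨b, h.symm⟩
  · intro s _
    rw [coeff_mul_X_pow', if_neg]
    nlinarith

lemma prod_mul_gaussProd (n : ℕ) :
    (∏ i ∈ range (2 * n), (1 - X ^ (i + 1) : K⟦X⟧)) * gaussProd K n =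
      (∏ i ∈ range n, (1 - X ^ (2 * (i + 1)) : K⟦X⟧)) ^ 2 := by
  induction n with
  | zero => simp [gaussProd]
  | succ n ih =>
    rw [show 2 * (n + 1) = 2 * n + 1 + 1 by ring, Finset.prod_range_succ, Finset.prod_range_succ,
      Finset.prod_range_succ]
    have h := gaussProd_succ K n
    linear_combination (∏ i ∈ range (2 * n), (1 - X ^ (i + 1) : K⟦X⟧)) *
      (1 - X ^ (2 * n + 1 + 1)) * h + (1 - X ^ (2 * n + 2)) ^ 2 * ih

end Gauss

open WithPiTopology Filter Topology in
/-- Gauss's product for the triangular series equals `f₂² / f₁`, which is `f₁³` modulo 2. -/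
lemma triSeries_eq_pow : triSeries (ZMod 2) = pentagonalSeries (ZMod 2) ^ 3 := by
  have : Fact (Nat.Prime 2) := ⟨by norm_num⟩
  let _ : TopologicalSpace (ZMod 2) := ⊥
  have _ : DiscreteTopology (ZMod 2) := ⟨rfl⟩
  have hf := (hasProd_one_sub_X_pow (ZMod 2)).tendsto_prod_nat
  have hf2 : Tendsto (fun n ↦ ∏ i ∈ range (2 * n), (1 - X ^ (i + 1) : (ZMod 2)⟦X⟧)) atTop
      (𝓝 (pentagonalSeries (ZMod 2))) :=
    hf.comp (tendsto_id.const_mul_atTop' (by norm_num))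
  have hg : Tendsto (fun n ↦ gaussProd (ZMod 2) n) atTop (𝓝 (triSeries (ZMod 2))) := by
    rw [tendsto_iff_coeff_tendsto]
    refine fun d ↦ tendsto_atTop_of_eventually_const (i₀ := d + 1) fun n hn ↦ ?_
    exact coeff_gaussProd _ n d (by omega)
  have h4 := hf.pow 4
  have heq : (fun n ↦ (∏ i ∈ range (2 * n), (1 - X ^ (i + 1) : (ZMod 2)⟦X⟧)) *
      gaussProd (ZMod 2) n) = fun n ↦ (∏ i ∈ range n, (1 - X ^ (i + 1) : (ZMod 2)⟦X⟧)) ^ 4 := by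
    ext1 n
    have hsq : ∏ i ∈ range n, (1 - X ^ (2 * (i + 1)) : (ZMod 2)⟦X⟧) =
        (∏ i ∈ range n, (1 - X ^ (i + 1) : (ZMod 2)⟦X⟧)) ^ 2 := by
      rw [← expand_eq_pow 2 (by norm_num), map_prod]
      simp [← pow_mul]
    rw [prod_mul_gaussProd, hsq, ← pow_mul]
  have hlim := heq ▸ hf2.mul hg
  have key := tendsto_nhds_unique hlim h4
  apply mul_left_cancel₀ (pentagonal_ne_zero (ZMod 2))
  rw [key]
  ring

/-! ### The quadratic form `3x² + 5y²` -/

/-- The set of integer solutions of `3x² + 5y² = 24n + 8` with `x ≡ y ≡ 1 (mod 4)`;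
the congruences pick one sign for each of the odd numbers `x` and `y`. -/
noncomputable def solSet (n : ℕ) : Finset (ℤ × ℤ) :=
  {p ∈ Icc (-(24 * n + 8 : ℤ)) (24 * n + 8) ×ˢ Icc (-(24 * n + 8 : ℤ)) (24 * n + 8) |
    p.1 % 4 = 1 ∧ p.2 % 4 = 1 ∧ 3 * p.1 ^ 2 + 5 * p.2 ^ 2 = 24 * n + 8}

lemma mem_solSet (n : ℕ) (p : ℤ × ℤ) : p ∈ solSet n ↔
    p.1 % 4 = 1 ∧ p.2 % 4 = 1 ∧ 3 * p.1 ^ 2 + 5 * p.2 ^ 2 = 24 * n + 8 := by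
  rw [solSet, mem_filter, and_iff_right_iff_imp]
  rintro ⟨h1, h2, h⟩
  simp only [mem_product, mem_Icc]
  refine ⟨⟨?_, ?_⟩, ?_, ?_⟩ <;> nlinarith [sq_nonneg (p.1 - 1), sq_nonneg (p.1 + 1),
    sq_nonneg (p.2 - 1), sq_nonneg (p.2 + 1)]

/-- For `n ≡ 2 (mod 4)` a solution has the form `(u + 5v, u - 3v)` with `u = y + 3v ≠ 0` and `v`
odd, because `u² + 15v² = 3n + 1`. -/
lemma sol_structure (n : ℕ) (hn : n % 4 = 2) (x y : ℤ) (hx : x % 4 = 1) (hy : y % 4 = 1)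
    (h : 3 * x ^ 2 + 5 * y ^ 2 = 24 * n + 8) :
    ∃ v : ℤ, x = y + 8 * v ∧ v % 2 = 1 ∧ y ≠ -3 * v := by
  obtain ⟨w, hw⟩ : ∃ w, x = y + 4 * w := ⟨(x - y) / 4, by omega⟩
  obtain ⟨z, hz⟩ : ∃ z, y = 4 * z + 1 := ⟨y / 4, by omega⟩
  obtain ⟨m, hm⟩ : ∃ m, n = 4 * m + 2 := ⟨n / 4, by omega⟩
  subst hw hz hm
  push_cast at h
  have hweven : w % 2 = 0 := by
    have : w = 2 * (6 * m + 3 - 8 * z ^ 2 - 4 * z - 6 * w * z - w - 3 * w ^ 2) := by linarith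
    omega
  obtain ⟨v, rfl⟩ : ∃ v, w = 2 * v := ⟨w / 2, by omega⟩
  -- `u² + 15 v² = 3n + 1` for `u = y + 3v`; reduction mod 4 makes `v` odd, mod 3 makes `u` nonzero.
  have hN : (4 * z + 1 + 3 * v) ^ 2 + 15 * v ^ 2 = 12 * m + 7 := by linarith
  refine ⟨v, by ring, ?_, ?_⟩
  · by_contra hv
    obtain ⟨c, rfl⟩ : ∃ c, v = 2 * c := ⟨v / 2, by omega⟩
    ring_nf at hN
    omega
  · intro h0
    rw [h0] at hN
    ring_nf at hN
    omega

/-- In the coordinates `x = u + 5v`, `y = u - 3v` the involution `u ↦ -u`, that is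
`(x, y) ↦ ((x - 5y)/4, -(3x + y)/4)`, preserves the solution set (the congruences mod 4 because `v` is
odd) and has no fixed point because `u ≠ 0`. -/
lemma card_solSet (n : ℕ) (hn : n % 4 = 2) : (#(solSet n) : ZMod 2) = 0 := by
  rw [Finset.cast_card]
  refine Finset.sum_involution
    (fun p _ ↦ ((p.1 - 5 * p.2) / 4, -((3 * p.1 + p.2) / 4))) ?_ ?_ ?_ ?_
  · intros; decide
  · rintro ⟨x, y⟩ hp _ heq
    rw [mem_solSet] at hp
    obtain ⟨v, hv, -, h0⟩ := sol_structure n hn x y hp.1 hp.2.1 hp.2.2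
    simp only [Prod.mk.injEq] at heq
    omega
  · rintro ⟨x, y⟩ hp
    rw [mem_solSet] at hp ⊢
    obtain ⟨v, hv, hv2, h0⟩ := sol_structure n hn x y hp.1 hp.2.1 hp.2.2
    simp only at hp hv ⊢
    have e1 : (x - 5 * y) / 4 = 2 * v - y := by omega
    have e2 : (3 * x + y) / 4 = y + 6 * v := by omega
    rw [e1, e2]
    refine ⟨by omega, by omega, ?_⟩
    rw [← hp.2.2, hv]
    ring
  · rintro ⟨x, y⟩ hp
    rw [mem_solSet] at hp
    obtain ⟨v, hv, -, -⟩ := sol_structure n hn x y hp.1 hp.2.1 hp.2.2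
    simp only [Prod.mk.injEq]
    omega

lemma tri_iff (a : ℕ) :
    (∃ k : ℕ, k * (k + 1) / 2 = a) ↔ ∃ x : ℤ, x % 4 = 1 ∧ x ^ 2 = 8 * a + 1 := by
  constructor
  · rintro ⟨k, hk⟩
    have h2 : 2 * a = k * (k + 1) := by
      rw [← hk]
      exact Nat.mul_div_cancel' (Nat.even_mul_succ_self k).two_dvd
    zify at h2
    rcases Nat.even_or_odd' k with ⟨c, hc | hc⟩
    · exact ⟨2 * k + 1, by omega, by linarith⟩
    · exact ⟨-(2 * k + 1), by omega, by linarith⟩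
  · rintro ⟨x, hx, h⟩
    obtain ⟨z, rfl⟩ : ∃ z, x = 4 * z + 1 := ⟨x / 4, by omega⟩
    have ha : (a : ℤ) = z * (2 * z + 1) := by linarith
    rcases le_or_gt 0 z with hz | hz
    · lift z to ℕ using hz
      norm_cast at ha
      refine ⟨2 * z, ?_⟩
      rw [ha, mul_assoc, Nat.mul_div_cancel_left _ (by norm_num)]
    · obtain ⟨c, rfl⟩ : ∃ c : ℕ, z = -((c : ℤ) + 1) := ⟨(-z - 1).toNat, by omega⟩
      have ha' : a = (c + 1) * (2 * c + 1) := by zify; linarith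
      refine ⟨2 * c + 1, ?_⟩
      rw [ha', show (2 * c + 1) * (2 * c + 1 + 1) = 2 * ((c + 1) * (2 * c + 1)) by ring,
        Nat.mul_div_cancel_left _ (by norm_num)]

lemma pentagonal_iff (b : ℕ) :
    b ∈ Set.range pentagonal ↔ ∃ y : ℤ, y % 4 = 1 ∧ y ^ 2 = 24 * b + 1 := by
  constructor
  · rintro ⟨k, rfl⟩
    have h2 := two_mul_natCast_pentagonal k
    rcases Int.even_or_odd' k with ⟨c, hc | hc⟩
    · exact ⟨-(6 * k - 1), by omega, by linarith⟩
    · exact ⟨6 * k - 1, by omega, by linarith⟩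
  · rintro ⟨y, hy, h⟩
    have key : ∀ k : ℤ, (6 * k - 1) ^ 2 = y ^ 2 → b ∈ Set.range pentagonal := by
      intro k hk
      refine ⟨k, ?_⟩
      have h2 := two_mul_natCast_pentagonal k
      zify
      linarith
    have h3 : y % 3 = 0 ∨ y % 3 = 1 ∨ y % 3 = 2 := by omega
    rcases h3 with h3 | h3 | h3
    · obtain ⟨c, rfl⟩ : ∃ c, y = 3 * c := ⟨y / 3, by omega⟩
      ring_nf at h
      omega
    · refine key (-(y / 6)) ?_
      obtain ⟨c, rfl⟩ : ∃ c, y = 6 * c + 1 := ⟨y / 6, by omega⟩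
      rw [show (6 * c + 1) / 6 = c by omega]
      ring
    · refine key (y / 6 + 1) ?_
      obtain ⟨c, rfl⟩ : ∃ c, y = 6 * c + 5 := ⟨y / 6, by omega⟩
      rw [show (6 * c + 5) / 6 = c by omega]
      ring

lemma eq_of_sq_eq {x y : ℤ} (hx : x % 4 = 1) (hy : y % 4 = 1) (h : x ^ 2 = y ^ 2) : x = y := by
  rcases sq_eq_sq_iff_eq_or_eq_neg.mp h with h | h <;> omega

lemma exists_of_mem_solSet {n : ℕ} {x y : ℤ} (h : (x, y) ∈ solSet n) :
    ∃ a b : ℕ, x ^ 2 = 8 * a + 1 ∧ 5 * y ^ 2 = 24 * b + 5 ∧ a + b = n := by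
  obtain ⟨hx, hy, h⟩ := (mem_solSet _ _).mp h
  simp only at hx hy h
  obtain ⟨z, rfl⟩ : ∃ z, x = 4 * z + 1 := ⟨x / 4, by omega⟩
  have hz : 0 ≤ z * (2 * z + 1) := by
    rcases le_or_gt 0 z with hz | hz <;> nlinarith
  have hy1 : 1 ≤ y ^ 2 := by
    have : y ≠ 0 := by omega
    have := sq_pos_of_ne_zero this
    omega
  obtain ⟨a, ha⟩ := Int.eq_ofNat_of_zero_le hz
  have hx2 : (4 * z + 1) ^ 2 = 8 * a + 1 := by linarith
  have hle : (a : ℤ) ≤ n := by linarith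
  refine ⟨a, n - a, hx2, ?_, by omega⟩
  rw [Nat.cast_sub (by omega)]
  linarith

/-- Modulo 2, the coefficient of `q^n` in `f₁³ f₅` counts the ways to write `n` as a triangular number
plus five times a pentagonal number; completing squares turns these into solutions of
`3x² + 5y² = 24n + 8`. -/
lemma coeff_tri_mul_pentagonal (n : ℕ) :
    coeff n (triSeries (ZMod 2) * expand 5 (by norm_num) (pentagonalSeries (ZMod 2))) =
      (#(solSet n) : ZMod 2) := by
  classical
  have ht (a : ℕ) : coeff a (triSeries (ZMod 2)) =
      if ∃ x : ℤ, x % 4 = 1 ∧ x ^ 2 = 8 * a + 1 then 1 else 0 := by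
    rw [triSeries, coeff_mk]
    exact if_congr (tri_iff a) rfl rfl
  have hp (b : ℕ) : coeff b (expand 5 (by norm_num) (pentagonalSeries (ZMod 2))) =
      if ∃ y : ℤ, y % 4 = 1 ∧ 5 * y ^ 2 = 24 * b + 5 then 1 else 0 := by
    rw [coeff_expand]
    by_cases h5 : 5 ∣ b
    · obtain ⟨c, rfl⟩ := h5
      rw [if_pos ⟨c, rfl⟩, Nat.mul_div_cancel_left _ (by norm_num)]
      by_cases hc : c ∈ Set.range pentagonal
      · obtain ⟨y, hy, h⟩ := (pentagonal_iff c).mp hc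
        rw [if_pos ⟨y, hy, by push_cast; linarith⟩]
        obtain ⟨k, rfl⟩ := hc
        rw [coeff_pentagonalSeries_pentagonal]
        rcases Int.even_or_odd k with hk | hk
        · simp [Int.negOnePow_even k hk]
        · simp [Int.negOnePow_odd k hk]
      · rw [coeff_pentagonalSeries_eq_zero _ hc, if_neg]
        rintro ⟨y, hy, h⟩
        refine hc ((pentagonal_iff c).mpr ⟨y, hy, ?_⟩)
        push_cast at h
        linarith
    · rw [if_neg h5, if_neg]
      rintro ⟨y, -, h⟩
      omega
  rw [coeff_mul]
  simp only [ht, hp, ← ite_and, mul_ite, mul_one, mul_zero]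
  rw [← Finset.sum_filter, ← Finset.cast_card]
  congr 1
  symm
  refine Finset.card_bij (fun p _ ↦ (((p.1 ^ 2 - 1) / 8).toNat, ((5 * p.2 ^ 2 - 5) / 24).toNat))
    ?_ ?_ ?_
  · rintro ⟨x, y⟩ h
    obtain ⟨hx, hy, -⟩ := (mem_solSet _ _).mp h
    obtain ⟨a, b, ha, hb, hab⟩ := exists_of_mem_solSet h
    have e1 : ((x ^ 2 - 1) / 8).toNat = a := by omega
    have e2 : ((5 * y ^ 2 - 5) / 24).toNat = b := by omega
    simp only [mem_filter, HasAntidiagonal.mem_antidiagonal, e1, e2]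
    exact ⟨hab, ⟨y, hy, hb⟩, x, hx, ha⟩
  · rintro ⟨x, y⟩ h ⟨x', y'⟩ h' heq
    obtain ⟨hx, hy, -⟩ := (mem_solSet _ _).mp h
    obtain ⟨hx', hy', -⟩ := (mem_solSet _ _).mp h'
    obtain ⟨a, b, ha, hb, -⟩ := exists_of_mem_solSet h
    obtain ⟨a', b', ha', hb', -⟩ := exists_of_mem_solSet h'
    simp only [Prod.mk.injEq] at heq hx hy hx' hy'
    rw [eq_of_sq_eq hx hx' (by omega), eq_of_sq_eq hy hy' (by omega)]
  · rintro ⟨a, b⟩ h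
    simp only [mem_filter, HasAntidiagonal.mem_antidiagonal] at h
    obtain ⟨hab, ⟨y, hy, hb⟩, x, hx, ha⟩ := h
    refine ⟨(x, y), (mem_solSet _ _).mpr ⟨hx, hy, ?_⟩, ?_⟩
    · simp only
      rw [← hab]
      push_cast
      linarith
    · simp only [Prod.mk.injEq]
      omega

/-! ### Vanishing modulo 2 and conclusion -/

/-- Since `f₅/f₁ = f₁³ f₅ / f₁⁴` and fourth powers are series in `q⁴` over `𝔽₂`, only the coefficients of
`f₁³ f₅` at exponents `≡ 2 (mod 4)` matter. -/
lemma coeff_regSeries_pow_mod_two (t n : ℕ) (hn : n % 4 = 2) :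
    coeff n (regSeries (ZMod 2) ^ (20 * t + 9)) = 0 := by
  have : Fact (Nat.Prime 2) := ⟨by norm_num⟩
  set f := pentagonalSeries (ZMod 2) with hf
  set G := regSeries (ZMod 2) with hG
  have h4 (F : (ZMod 2)⟦X⟧) : expand 4 (by norm_num) F = F ^ 4 := by
    have := expand_mul 2 (by norm_num) 2 (by norm_num) F
    rw [expand_eq_pow, expand_eq_pow, ← pow_mul] at this
    exact this
  have hinv : f * f⁻¹ = 1 := by
    refine PowerSeries.mul_inv_cancel _ ?_
    have := coeff_pentagonalSeries_pentagonal (ZMod 2) 0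
    rw [← coeff_zero_eq_constantCoeff_apply]
    simpa [pentagonal_def] using this.trans_ne (by simp)
  have hpow : G ^ (20 * t + 9) = expand 4 (by norm_num) (G ^ (5 * t + 2) * f⁻¹) *
      (triSeries (ZMod 2) * expand 5 (by norm_num) f) := by
    rw [h4, triSeries_eq_pow, ← regSeries_mul_pentagonal, ← hf, ← hG]
    have : (f * f⁻¹) ^ 4 = 1 := by rw [hinv, one_pow]
    linear_combination - G ^ (20 * t + 9) * this
  rw [hpow]
  refine coeff_expand_mul_eq_zero _ _ _ _ _ fun b hb ↦ ?_
  rw [coeff_tri_mul_pentagonal, card_solSet _ (by omega)]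

theorem stmt_11 (n t : ℕ) (α : ℕ) (hα : α ∈ ({14, 18} : Finset ℕ)) :
    B 5 (20 * t + 9) (20 * n + α) ≡ 0 [MOD 10] := by
  have hα' : α = 14 ∨ α = 18 := by simpa using hα
  have h2 : 2 ∣ B 5 (20 * t + 9) (20 * n + α) := by
    rw [← ZMod.natCast_eq_zero_iff, cast_B_eq_coeff]
    exact coeff_regSeries_pow_mod_two _ _ (by omega)
  have h5 : 5 ∣ B 5 (20 * t + 9) (20 * n + α) := by
    have : Fact (Nat.Prime 5) := ⟨by norm_num⟩
    rw [← ZMod.natCast_eq_zero_iff, cast_B_eq_coeff]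
    exact coeff_regSeries_pow_mod_five _ _ (by omega)
  rw [Nat.modEq_zero_iff_dvd]
  omega
end

section
/- For all integers n ≥ 0 and t ≥ 0 and for each α ∈ {2, 14, 18}, B_5^{(20t+17)}(20n + α) ≡ 0 (mod 10). -/
namespace RegularMultipartition
open PowerSeries Finset

/-! ### Generating functions -/

/-- The generating function of the number of `ℓ`-regular partitions of `n`, with
coefficients in `R`. -/
noncomputable def regularSeries (R : Type*) [CommRing R] (ℓ : ℕ) : R⟦X⟧ :=
  PowerSeries.mk fun n ↦ (#(Nat.Partition.restricted n (¬ ℓ ∣ ·)) : R)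

/-- A multipartition of `n` amounts to its tuple of sizes together with a regular partition of each
size. -/
def multipartitionEquiv (ℓ r n : ℕ) :
    {f : Fin r → Σ a : Fin (n + 1), Nat.Partition a //
      (∑ i, ((f i).1 : ℕ)) = n ∧ ∀ i, ∀ part ∈ (f i).2.parts, ¬ ℓ ∣ part} ≃
    Σ g : {g : Fin r → ℕ // g ∈ piAntidiag univ n},
      ∀ i, {p : Nat.Partition (g.1 i) // p ∈ Nat.Partition.restricted (g.1 i) (¬ ℓ ∣ ·)} where
  toFun f := ⟨⟨fun i ↦ (f.1 i).1, by simpa using f.2.1⟩,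
    fun i ↦ ⟨(f.1 i).2, by simpa [Nat.Partition.restricted] using f.2.2 i⟩⟩
  invFun x := ⟨fun i ↦ ⟨⟨x.1.1 i, by
      have h : ∑ i, x.1.1 i = n := (mem_piAntidiag.1 x.1.2).1
      have := single_le_sum (f := x.1.1) (fun _ _ ↦ Nat.zero_le _) (mem_univ i)
      omega⟩, (x.2 i).1⟩, (mem_piAntidiag.1 x.1.2).1, fun i ↦
      (mem_filter.1 (x.2 i).2).2⟩
  left_inv _ := rfl
  right_inv _ := rfl

theorem B_eq_sum (ℓ r n : ℕ) :
    B ℓ r n = ∑ g ∈ piAntidiag (univ : Finset (Fin r)) n,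
      ∏ i, #(Nat.Partition.restricted (g i) (¬ ℓ ∣ ·)) := by
  rw [B, Fintype.card_congr (multipartitionEquiv ℓ r n), Fintype.card_sigma]
  simp only [Fintype.card_pi, Fintype.card_coe]
  exact sum_coe_sort (piAntidiag univ n)
    fun g ↦ ∏ i, #(Nat.Partition.restricted (g i) (¬ ℓ ∣ ·))

theorem natCast_B (R : Type*) [CommRing R] (ℓ r n : ℕ) :
    (B ℓ r n : R) = coeff n (regularSeries R ℓ ^ r) := by
  have h : regularSeries R ℓ ^ r = ∏ _i : Fin r, regularSeries R ℓ := by simp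
  rw [h, coeff_prod, B_eq_sum]
  push_cast
  refine (sum_nbij (fun l : Fin r →₀ ℕ ↦ (l : Fin r → ℕ)) ?_ DFunLike.coe_injective.injOn ?_ ?_).symm
  · intro l hl
    simpa using hl
  · intro g hg
    refine ⟨Finsupp.equivFunOnFinite.symm g, ?_, rfl⟩
    simpa using hg
  · intro l _
    simp [regularSeries]

/-- `∑ b_ℓ(n) q ^ n * ∏ (1 - q ^ i) = ∏ (1 - q ^ (ℓ i))`, the Euler product being
`pentagonalSeries` by the pentagonal number theorem. -/
theorem regularSeries_mul_pentagonalSeries (R : Type*) [CommRing R] [IsDomain R] {ℓ : ℕ}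
    (hℓ : ℓ ≠ 0) :
    regularSeries R ℓ * pentagonalSeries R = expand ℓ hℓ (pentagonalSeries R) := by
  let : TopologicalSpace R := ⊥
  have : DiscreteTopology R := ⟨rfl⟩
  open scoped PowerSeries.WithPiTopology in
  have h1 := Nat.Partition.hasProd_powerSeriesMk_card_countRestricted R (Nat.pos_of_ne_zero hℓ)
  rw [← Nat.Partition.powerSeriesMk_card_restricted_eq_powerSeriesMk_card_countRestricted R
    (Nat.pos_of_ne_zero hℓ)] at h1
  have h2 := PowerSeries.WithPiTopology.hasProd_one_sub_X_pow R
  have hc : Continuous (expand (R := R) ℓ hℓ) := by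
    refine continuous_iff_continuousAt.2 fun F ↦ ?_
    refine (PowerSeries.WithPiTopology.tendsto_iff_coeff_tendsto _ _ _ _).2 fun d ↦ ?_
    simp only [coeff_expand]
    split_ifs
    · exact (PowerSeries.WithPiTopology.continuous_coeff R _).tendsto F
    · exact tendsto_const_nhds
  have h3 := h2.map (expand (R := R) ℓ hℓ) hc
  refine (h1.mul h2).unique ?_
  convert! h3 using 2 with i
  simp_rw [pow_mul, geom_sum_mul_neg]
  simp [← pow_mul, mul_comm]

/-- Over `ZMod p`, raising to the power `p ^ n` is the substitution `X ↦ X ^ (p ^ n)`. -/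
theorem pow_eq_expand (p n : ℕ) [Fact p.Prime] (F : (ZMod p)⟦X⟧) :
    F ^ p ^ n = expand (p ^ n) (pow_ne_zero n (Fact.out : p.Prime).ne_zero) F := by
  have := MvPowerSeries.map_iterateFrobenius_expand p (Fact.out : p.Prime).ne_zero F n
  rw [← this]
  have h : iterateFrobenius (ZMod p) p n = RingHom.id _ := Subsingleton.elim _ _
  rw [h]
  rfl

/-- Multiplying by a series in `X ^ d` preserves the vanishing of all coefficients in a residue class
modulo `d`. -/
theorem coeff_expand_mul_eq_zero {R : Type*} [CommRing R] {d : ℕ} (hd : d ≠ 0) (A H : R⟦X⟧) {n : ℕ}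
    (h : ∀ j, j ≡ n [MOD d] → coeff j H = 0) : coeff n (expand d hd A * H) = 0 := by
  rw [coeff_mul]
  refine sum_eq_zero fun x hx ↦ ?_
  rw [coeff_expand]
  split_ifs with hdvd
  · rw [h x.2, mul_zero]
    rw [← mem_antidiagonal.1 hx]
    simpa using ((Nat.modEq_zero_iff_dvd.2 hdvd).symm.add_right x.2)
  · simp

/-! ### Jacobi's identity for the cube of the Euler product -/

section Jacobi
variable (k : Type*) [Field k]

/-- The finite product `(q; q)_n`, the product of `1 - q ^ i` over `1 ≤ i ≤ n`, with `q = X`. -/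
noncomputable def qPoch (n : ℕ) : k⟦X⟧ := ∏ i ∈ range n, (1 - X ^ (i + 1))

theorem qPoch_succ (n : ℕ) : qPoch k (n + 1) = qPoch k n * (1 - X ^ (n + 1)) :=
  prod_range_succ _ _

theorem constantCoeff_qPoch (n : ℕ) : constantCoeff (qPoch k n) = 1 := by
  simp [qPoch]

theorem qPoch_mul_inv (n : ℕ) : qPoch k n * (qPoch k n)⁻¹ = 1 :=
  PowerSeries.mul_inv_cancel _ (by simp [constantCoeff_qPoch])

theorem inv_qPoch (n : ℕ) : (qPoch k n)⁻¹ = (1 - X ^ (n + 1)) * (qPoch k (n + 1))⁻¹ := by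
  have h := qPoch_mul_inv k (n + 1)
  have h' := qPoch_mul_inv k n
  rw [qPoch_succ] at h ⊢
  linear_combination (-(qPoch k n)⁻¹) * h +
    (1 - X ^ (n + 1)) * (qPoch k n * (1 - X ^ (n + 1)))⁻¹ * h'

/-- The Gaussian binomial coefficient `[2n + 1, n - m]` in `q = X`, taken to be 0 for `m > n`. -/
noncomputable def centralBinom (n m : ℕ) : k⟦X⟧ :=
  if m ≤ n then qPoch k (2 * n + 1) * (qPoch k (n - m))⁻¹ * (qPoch k (n + m + 1))⁻¹ else 0

theorem centralBinom_of_lt {n m : ℕ} (h : n < m) : centralBinom k n m = 0 := if_neg (by omega)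

theorem centralBinom_add (m d : ℕ) : centralBinom k (m + d) m =
    qPoch k (2 * (m + d) + 1) * (qPoch k d)⁻¹ * (qPoch k (m + d + m + 1))⁻¹ := by
  rw [centralBinom, if_pos (by omega), Nat.add_sub_cancel_left]

/-- The three-term recurrence for the coefficients of
`∏_{0 ≤ j ≤ n} (1 - z q ^ j) * ∏_{1 ≤ j ≤ n} (1 - z⁻¹ q ^ j)` under `n ↦ n + 1`, divided by a
common sign and power of `q`. -/
theorem centralBinom_succ_succ (n m : ℕ) :
    X ^ (m + 1) * centralBinom k (n + 1) (m + 1) =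
      (1 + X ^ (2 * n + 2)) * X ^ (m + 1) * centralBinom k n (m + 1) +
        X ^ (n + 1) * (centralBinom k n m + X ^ (2 * m + 3) * centralBinom k n (m + 2)) := by
  rcases lt_or_ge n m with h | h
  · simp [centralBinom_of_lt, h, show n < m + 1 by omega, show n < m + 2 by omega]
  obtain ⟨d, rfl⟩ := Nat.exists_eq_add_of_le h
  rw [show m + d + 1 = (m + 1) + d by ring, centralBinom_add k (m + 1) d, centralBinom_add k m d,
    show 2 * (m + 1 + d) + 1 = 2 * (m + d) + 1 + 1 + 1 by ring, qPoch_succ, qPoch_succ,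
    show m + 1 + d + (m + 1) + 1 = m + d + m + 1 + 1 + 1 by ring,
    inv_qPoch k (m + d + m + 1), inv_qPoch k (m + d + m + 1 + 1)]
  rcases d with _ | _ | e
  · rw [centralBinom_of_lt k (by omega), centralBinom_of_lt k (by omega)]
    ring
  · rw [centralBinom_of_lt k (show m + (0 + 1) < m + 2 by omega),
      show m + (0 + 1) = (m + 1) + 0 by ring, centralBinom_add k (m + 1) 0, inv_qPoch k 0,
      show m + 1 + 0 + (m + 1) + 1 = m + 1 + 0 + m + 1 + 1 by ring,
      inv_qPoch k (m + 1 + 0 + m + 1 + 1)]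
    ring
  · rw [show m + (e + 1 + 1) = (m + 1) + (e + 1) by ring, centralBinom_add k (m + 1) (e + 1),
      show (m + 1) + (e + 1) = (m + 2) + e by ring, centralBinom_add k (m + 2) e,
      inv_qPoch k e, inv_qPoch k (e + 1),
      show m + 2 + e + (m + 2) + 1 = m + 2 + e + m + 1 + 1 + 1 by ring,
      show m + 2 + e + (m + 1) + 1 = m + 2 + e + m + 1 + 1 by ring,
      inv_qPoch k (m + 2 + e + m + 1 + 1)]
    ring

/-- The analogue of `centralBinom_succ_succ` at the edge, where the coefficients of index `0` and
`-1` agree up to sign. -/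
theorem centralBinom_succ_zero (n : ℕ) :
    centralBinom k (n + 1) 0 =
      (1 + X ^ (2 * n + 2)) * centralBinom k n 0 +
        X ^ (n + 1) * (centralBinom k n 0 + X * centralBinom k n 1) := by
  have h0 (n : ℕ) : centralBinom k n 0 =
    qPoch k (2 * n + 1) * (qPoch k n)⁻¹ * (qPoch k (n + 1))⁻¹ := by simp [centralBinom]
  rw [h0, h0, show 2 * (n + 1) + 1 = 2 * n + 1 + 1 + 1 by ring, qPoch_succ, qPoch_succ]
  rcases n with _ | n
  · rw [centralBinom_of_lt k (by omega), inv_qPoch k 0, inv_qPoch k (0 + 1)]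
    ring
  · rw [centralBinom, if_pos (by omega), Nat.add_sub_cancel, inv_qPoch k n, inv_qPoch k (n + 1),
      inv_qPoch k (n + 1 + 1)]
    ring

/-- Up to sign and a shift of index, the coefficient of `z ^ m` in the finite triple product
`∏_{0 ≤ j ≤ n} (1 - z q ^ j) * ∏_{1 ≤ j ≤ n} (1 - z⁻¹ q ^ j)`. -/
noncomputable def thetaTerm (n m : ℕ) : k⟦X⟧ :=
  (-1) ^ m * X ^ (m * (m + 1) / 2) * centralBinom k n m

theorem triangle_succ (m : ℕ) : (m + 1) * (m + 1 + 1) / 2 = m * (m + 1) / 2 + (m + 1) := by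
  rw [show (m + 1) * (m + 1 + 1) = m * (m + 1) + 2 * (m + 1) by ring]
  omega

theorem thetaTerm_succ_succ (n m : ℕ) :
    thetaTerm k (n + 1) (m + 1) = (1 + X ^ (2 * n + 2)) * thetaTerm k n (m + 1) -
      X ^ (n + 1) * (thetaTerm k n m + thetaTerm k n (m + 2)) := by
  have h := centralBinom_succ_succ k n m
  simp only [thetaTerm, triangle_succ]
  linear_combination (-1) ^ (m + 1) * X ^ (m * (m + 1) / 2) * h

theorem thetaTerm_succ_zero (n : ℕ) :
    thetaTerm k (n + 1) 0 = (1 + X ^ (2 * n + 2)) * thetaTerm k n 0 -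
      X ^ (n + 1) * (thetaTerm k n 1 - thetaTerm k n 0) := by
  have h := centralBinom_succ_zero k n
  simp only [thetaTerm]
  norm_num
  linear_combination h

/-- Partial-sum form of the step `n ↦ n + 1` in `sum_thetaTerm`; the last summand is the boundary
term of the index shifts. -/
theorem sum_thetaTerm_succ (n M : ℕ) :
    ∑ m ∈ range (M + 1), (2 * m + 1) * thetaTerm k (n + 1) m =
      (1 - X ^ (n + 1)) ^ 2 * ∑ m ∈ range (M + 1), (2 * m + 1) * thetaTerm k n m +
      X ^ (n + 1) * ((2 * (M : k⟦X⟧) + 3) * thetaTerm k n M -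
        (2 * (M : k⟦X⟧) + 1) * thetaTerm k n (M + 1)) := by
  induction M with
  | zero =>
    simp [thetaTerm_succ_zero]
    ring
  | succ M ih =>
    rw [sum_range_succ, ih, sum_range_succ _ (M + 1), thetaTerm_succ_succ]
    push_cast
    ring

theorem thetaTerm_of_lt {n m : ℕ} (h : n < m) : thetaTerm k n m = 0 := by
  rw [thetaTerm, centralBinom_of_lt k h, mul_zero]

/-- A finite form of Jacobi's identity. -/
theorem sum_thetaTerm (n : ℕ) :
    ∑ m ∈ range (n + 1), (2 * m + 1) * thetaTerm k n m = qPoch k n ^ 2 := by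
  induction n with
  | zero =>
    simp [thetaTerm, centralBinom]
    simp [qPoch]
  | succ n ih =>
    rw [sum_thetaTerm_succ, sum_range_succ, ih, thetaTerm_of_lt k (show n < n + 1 by omega),
      thetaTerm_of_lt k (show n < n + 1 + 1 by omega), qPoch_succ]
    ring

theorem X_pow_dvd_qPoch_sub {N i j : ℕ} (hi : N ≤ i) (hij : i ≤ j) :
    (X : k⟦X⟧) ^ (N + 1) ∣ qPoch k j - qPoch k i := by
  induction j, hij using Nat.le_induction with
  | base => simp
  | succ j hij ih =>
    rw [qPoch_succ, show qPoch k j * (1 - X ^ (j + 1)) - qPoch k i =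
      (qPoch k j - qPoch k i) - X ^ (j + 1) * qPoch k j by ring]
    exact dvd_sub ih (Dvd.dvd.mul_right (pow_dvd_pow _ (by omega)) _)

theorem X_pow_dvd_pentagonalSeries_sub {N i : ℕ} (hi : N ≤ i) :
    (X : k⟦X⟧) ^ (N + 1) ∣ pentagonalSeries k - qPoch k i := by
  rw [X_pow_dvd_iff]
  intro d hd
  obtain ⟨M, hM⟩ := ((Filter.tendsto_finset_range.eventually
    (coeff_prod_one_sub_X_pow_eventually_eq k d)).and (Filter.eventually_ge_atTop i)).exists
  have h := X_pow_dvd_iff.1 (X_pow_dvd_qPoch_sub k hi hM.2) d hd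
  rw [map_sub, ← hM.1]
  rwa [map_sub] at h

theorem pentagonalSeries_mul_inv : pentagonalSeries k * (pentagonalSeries k)⁻¹ = 1 := by
  refine PowerSeries.mul_inv_cancel _ ?_
  have h := X_pow_dvd_iff.1 (X_pow_dvd_pentagonalSeries_sub k (le_refl 0)) 0 (by simp)
  have h' : constantCoeff (pentagonalSeries k) = 1 := by simpa [qPoch, sub_eq_zero] using h
  simp [h']

/-- Jacobi's identity `∏ (1 - q ^ i) ^ 3 = ∑ (-1) ^ m (2m + 1) q ^ (m (m + 1) / 2)` modulo
`q ^ (N + 1)`: in `sum_thetaTerm` with `n = 2N`, each `[2n + 1, n - m]` with `m ≤ N` is congruent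
to the inverse of the Euler product, and the terms with `m > N` vanish. -/
theorem jacobi_cube (N : ℕ) :
    (X : k⟦X⟧) ^ (N + 1) ∣ pentagonalSeries k ^ 3 -
      ∑ m ∈ range (2 * N + 1), (2 * (m : k⟦X⟧) + 1) * ((-1) ^ m * X ^ (m * (m + 1) / 2)) := by
  rw [← Ideal.mem_span_singleton, ← Ideal.Quotient.eq]
  set φ := Ideal.Quotient.mk (Ideal.span {(X : k⟦X⟧) ^ (N + 1)})
  have hX {a b : k⟦X⟧} (h : X ^ (N + 1) ∣ a - b) : φ a = φ b := by
    rwa [Ideal.Quotient.eq, Ideal.mem_span_singleton]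
  have hP {i : ℕ} (hi : N ≤ i) : φ (qPoch k i) = φ (pentagonalSeries k) :=
    (hX (X_pow_dvd_pentagonalSeries_sub k hi)).symm
  have hE := congrArg φ (pentagonalSeries_mul_inv k)
  rw [map_mul, map_one] at hE
  have hb {m : ℕ} (hm : m ≤ N) :
      φ (pentagonalSeries k) * φ (centralBinom k (2 * N) m) = 1 := by
    rw [centralBinom, if_pos (by omega)]
    have h1 := congrArg φ (qPoch_mul_inv k (2 * N - m))
    have h2 := congrArg φ (qPoch_mul_inv k (2 * N + m + 1))
    simp only [map_mul, map_one] at h1 h2 ⊢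
    rw [hP (by omega)] at h1 h2 ⊢
    linear_combination (φ (pentagonalSeries k) * φ (qPoch k (2 * N + m + 1))⁻¹) * h1 + h2
  have hS := congrArg φ (sum_thetaTerm k (2 * N))
  rw [map_pow, hP (by omega)] at hS
  rw [map_pow, pow_succ' (φ (pentagonalSeries k)) 2, ← hS, map_sum, map_sum, mul_sum]
  refine sum_congr rfl fun m _ ↦ ?_
  rw [thetaTerm]
  rcases le_or_gt m N with hm | hm
  · have h := hb hm
    simp only [map_mul]
    linear_combination φ (2 * m + 1) * φ ((-1) ^ m) * φ (X ^ (m * (m + 1) / 2)) * h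
  · have h0 : φ (X ^ (m * (m + 1) / 2)) = 0 := by
      rw [← map_zero φ]
      refine hX ?_
      rw [sub_zero]
      refine pow_dvd_pow _ ?_
      rw [Nat.le_div_iff_mul_le (by norm_num)]
      nlinarith
    simp only [map_mul, h0]
    ring

theorem coeff_pentagonalSeries_cube (N : ℕ) :
    coeff N (pentagonalSeries k ^ 3) =
      ∑ m ∈ range (2 * N + 1), if N = m * (m + 1) / 2 then (2 * m + 1 : k) * (-1) ^ m else 0 := by
  have h := X_pow_dvd_iff.1 (jacobi_cube k N) N (by omega)
  rw [map_sub, sub_eq_zero] at h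
  rw [h, map_sum]
  refine sum_congr rfl fun m _ ↦ ?_
  rw [show (2 * (m : k⟦X⟧) + 1) * ((-1) ^ m * X ^ (m * (m + 1) / 2)) =
    C ((2 * m + 1 : k) * (-1) ^ m) * X ^ (m * (m + 1) / 2) by
      simp only [map_mul, map_add, map_natCast, map_pow, map_neg, map_one, map_ofNat]
      ring,
    coeff_C_mul_X_pow]

end Jacobi

/-! ### The cube of the Euler product modulo 5 -/

/-- A triangular number lies in one of the classes 0, 1, 3 modulo 5, and it is 3 modulo 5 only for an
index `m` with `5 ∣ 2 * m + 1`; so Jacobi's series has no terms of exponent 2, 3, 4 modulo 5. -/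
theorem coeff_cube_zmod_five {n : ℕ} (hn : n % 5 = 2 ∨ n % 5 = 3 ∨ n % 5 = 4) :
    coeff n (pentagonalSeries (ZMod 5) ^ 3) = 0 := by
  have : Fact (Nat.Prime 5) := ⟨by norm_num⟩
  rw [coeff_pentagonalSeries_cube]
  refine sum_eq_zero fun m _ ↦ ?_
  split_ifs with h
  · have h2 : m * (m + 1) = 2 * n := by
      have := (Nat.even_mul_succ_self m).two_dvd
      omega
    have h5 : 5 ∣ 2 * m + 1 := by
      have h3 : (m % 5) * (m % 5 + 1) % 5 = 2 * n % 5 := by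
        rw [← h2, Nat.mul_mod, Nat.mod_mod, Nat.mul_mod m, Nat.add_mod m, Nat.add_mod (m % 5)]
      have h4 : m % 5 < 5 := Nat.mod_lt _ (by norm_num)
      generalize hr : m % 5 = r at h3 h4
      interval_cases r <;> omega
    have h6 : ((2 * m + 1 : ℕ) : ZMod 5) = 0 := (ZMod.natCast_eq_zero_iff _ _).2 h5
    push_cast at h6
    rw [h6, zero_mul]
  · rfl

/-! ### Parity: representations by `3a² + 5b²` -/

/-- Modulo 2 the pentagonal series dilated by 5 is the sum of `X ^ (5 * (b ^ 2 - 1) / 24)` over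
positive `b` coprime to 6. -/
theorem coeff_expand_zmod_two (x : ℕ) [Decidable (∃ b, Odd b ∧ ¬ 3 ∣ b ∧ 24 * x + 5 = 5 * b ^ 2)] :
    coeff x (expand 5 (by norm_num) (pentagonalSeries (ZMod 2))) =
      if ∃ b, Odd b ∧ ¬ 3 ∣ b ∧ 24 * x + 5 = 5 * b ^ 2 then 1 else 0 := by
  have key : ∀ j : ℤ, (24 * (pentagonal j : ℤ) + 1) = (6 * j - 1) ^ 2 := fun j ↦ by
    linear_combination 12 * two_mul_natCast_pentagonal j
  split_ifs with h
  · obtain ⟨b, hb, hb3, hx⟩ := h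
    obtain ⟨j, hj⟩ : ∃ j : ℤ, (b : ℤ) = 6 * j - 1 ∨ (b : ℤ) = -(6 * j - 1) := by
      obtain ⟨c, rfl⟩ := hb
      rcases (by omega : c % 3 = 0 ∨ c % 3 = 2) with h | h
      · exact ⟨-(c / 3 : ℕ), by omega⟩
      · exact ⟨(c / 3 : ℕ) + 1, by omega⟩
    have hb2 : ((b : ℤ)) ^ 2 = (6 * j - 1) ^ 2 := by
      rcases hj with h | h
      · rw [h]
      · rw [h, neg_sq]
    have hk := key j
    obtain rfl : x = 5 * pentagonal j := by
      zify at hx ⊢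
      linarith
    rw [coeff_expand_mul, coeff_pentagonalSeries_pentagonal]
    rcases Int.even_or_odd j with hj | hj
    · simp [Int.negOnePow_even _ hj]
    · simp [Int.negOnePow_odd _ hj]
  · rw [coeff_expand]
    split_ifs with h5
    · obtain ⟨y, rfl⟩ := h5
      rw [Nat.mul_div_cancel_left _ (by norm_num)]
      refine coeff_pentagonalSeries_eq_zero _ ?_
      rintro ⟨j, rfl⟩
      refine h ⟨(6 * j - 1).natAbs, ?_, ?_, ?_⟩
      · rw [Int.natAbs_odd]
        exact ⟨3 * j - 1, by ring⟩
      · omega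
      · zify
        rw [sq_abs, ← key]
        ring
    · rfl

/-- Modulo 2 Jacobi's series is the sum of `X ^ ((a ^ 2 - 1) / 8)` over positive odd `a`. -/
theorem coeff_cube_zmod_two (y : ℕ) [Decidable (∃ a, Odd a ∧ 8 * y + 1 = a ^ 2)] :
    coeff y (pentagonalSeries (ZMod 2) ^ 3) =
      if ∃ a, Odd a ∧ 8 * y + 1 = a ^ 2 then 1 else 0 := by
  rw [coeff_pentagonalSeries_cube]
  have key : ∀ m : ℕ, 8 * (m * (m + 1) / 2) + 1 = (2 * m + 1) ^ 2 := fun m ↦ by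
    have := (Nat.even_mul_succ_self m).two_dvd
    have h2 : 2 * (m * (m + 1) / 2) = m * (m + 1) := by omega
    linear_combination 4 * h2
  split_ifs with h
  · obtain ⟨a, ⟨m, rfl⟩, hy⟩ := h
    have hm : y = m * (m + 1) / 2 := by have := key m; omega
    have hlt : m < 2 * y + 1 := by nlinarith
    rw [sum_eq_single_of_mem m (mem_range.2 hlt), if_pos hm]
    · have h2 : (2 : ZMod 2) = 0 := rfl
      have h1 : (-1 : ZMod 2) = 1 := rfl
      simp [h2, h1]
    · intro m' _ hne
      refine if_neg fun hm' ↦ hne ?_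
      have h1 := key m'
      rw [← hm', hy] at h1
      have := Nat.pow_left_injective (two_ne_zero) h1
      omega
  · refine sum_eq_zero fun m _ ↦ if_neg fun hm ↦ h ⟨2 * m + 1, ⟨m, rfl⟩, ?_⟩
    rw [hm, key]

/-- The pairs `(a, b)` of odd natural numbers with `3 ∤ b` and `3a² + 5b² = 24j + 8`. The bounds on
`a` and `b` only serve to make this a `Finset`; see `mem_reps`. -/
def reps (j : ℕ) : Finset (ℕ × ℕ) :=
  (range (24 * j + 9) ×ˢ range (24 * j + 9)).filter fun x ↦
    Odd x.1 ∧ Odd x.2 ∧ ¬ 3 ∣ x.2 ∧ 3 * x.1 ^ 2 + 5 * x.2 ^ 2 = 24 * j + 8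

theorem mem_reps {j : ℕ} {x : ℕ × ℕ} : x ∈ reps j ↔
    Odd x.1 ∧ Odd x.2 ∧ ¬ 3 ∣ x.2 ∧ 3 * x.1 ^ 2 + 5 * x.2 ^ 2 = 24 * j + 8 := by
  simp only [reps, mem_filter, mem_product, mem_range, and_iff_right_iff_imp]
  rintro ⟨-, -, -, h⟩
  constructor <;> nlinarith

theorem coeff_eq_card_reps (j : ℕ) :
    coeff j (expand 5 (by norm_num) (pentagonalSeries (ZMod 2)) * pentagonalSeries (ZMod 2) ^ 3) =
      ∑ _x ∈ reps j, (1 : ZMod 2) := by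
  classical
  rw [coeff_mul]
  have hterm : ∀ x ∈ antidiagonal j,
      coeff x.1 (expand 5 (by norm_num) (pentagonalSeries (ZMod 2))) *
        coeff x.2 (pentagonalSeries (ZMod 2) ^ 3) =
      if (∃ b, Odd b ∧ ¬ 3 ∣ b ∧ 24 * x.1 + 5 = 5 * b ^ 2) ∧
        ∃ a, Odd a ∧ 8 * x.2 + 1 = a ^ 2 then 1 else 0 := fun x _ ↦ by
    rw [coeff_expand_zmod_two, coeff_cube_zmod_two, mul_ite, mul_one, mul_zero]
    split_ifs <;> simp_all
  rw [sum_congr rfl hterm, ← sum_filter]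
  have hodd {a : ℕ} (ha : Odd a) : 8 * ((a ^ 2 - 1) / 8) + 1 = a ^ 2 := by
    obtain ⟨c, rfl⟩ := ha
    obtain ⟨e, he⟩ := (Nat.even_mul_succ_self c).two_dvd
    have h : (2 * c + 1) ^ 2 = 8 * e + 1 := by linear_combination 4 * he
    omega
  have hodd3 {b : ℕ} (hb : Odd b) (hb3 : ¬ 3 ∣ b) :
      24 * (5 * (b ^ 2 - 1) / 24) + 5 = 5 * b ^ 2 := by
    have h8 := hodd hb
    have h3 : b ^ 2 % 3 = 1 := by
      rcases (by omega : b % 3 = 1 ∨ b % 3 = 2) with h | h <;> simp [Nat.pow_mod, h]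
    omega
  symm
  refine sum_nbij (fun x ↦ (5 * (x.2 ^ 2 - 1) / 24, (x.1 ^ 2 - 1) / 8)) ?_ ?_ ?_ ?_
  · rintro ⟨a, b⟩ hx
    obtain ⟨ha, hb, hb3, h⟩ := mem_reps.1 hx
    simp only at ha hb hb3 h
    have h1 := hodd ha
    have h2 := hodd3 hb hb3
    simp only [mem_filter, HasAntidiagonal.mem_antidiagonal]
    exact ⟨by omega, ⟨b, hb, hb3, h2⟩, a, ha, h1⟩
  · rintro ⟨a, b⟩ hx ⟨a', b'⟩ hx' heq
    obtain ⟨ha, hb, hb3, -⟩ := mem_reps.1 hx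
    obtain ⟨ha', hb', hb3', -⟩ := mem_reps.1 hx'
    simp only [Prod.mk.injEq] at ha hb hb3 ha' hb' hb3' heq
    have h1 := hodd ha
    have h2 := hodd3 hb hb3
    have h1' := hodd ha'
    have h2' := hodd3 hb' hb3'
    ext
    · exact Nat.pow_left_injective two_ne_zero (by simp only; omega)
    · exact Nat.pow_left_injective two_ne_zero (by simp only; omega)
  · rintro ⟨x, y⟩ hxy
    rw [mem_coe, mem_filter, HasAntidiagonal.mem_antidiagonal] at hxy
    obtain ⟨hsum, ⟨b, hb, hb3, hx⟩, a, ha, hy⟩ := hxy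
    refine ⟨(a, b), mem_reps.2 ⟨ha, hb, hb3, by simp only; omega⟩, ?_⟩
    have h1 := hodd ha
    have h2 := hodd3 hb hb3
    ext <;> simp only <;> omega
  · simp

/-- The choice of sign `s = ± b` for which `8 ∣ a + s`, when there is one (see `sgn_spec`). -/
def sgn (a b : ℕ) : ℤ := if (8 : ℤ) ∣ a + b then b else -b

/-- The map `(a, b) ↦ (|a + 5s| / 4, |3a - s| / 4)` with `s = sgn a b`. Up to signs this is an
automorph of order two of the form `3x² + 5y²`. -/
def flip (x : ℕ × ℕ) : ℕ × ℕ :=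
  (((x.1 + 5 * sgn x.1 x.2) / 4).natAbs, ((3 * x.1 - sgn x.1 x.2) / 4).natAbs)

/-- For odd `a`, `b`, the congruence `3a² + 5b² ≡ 8 (mod 16)` forces `a ≡ ± b (mod 8)`. -/
theorem sgn_spec {l a b : ℕ} (ha : Odd a) (hb : Odd b)
    (h : 3 * a ^ 2 + 5 * b ^ 2 = 24 * (4 * l + 2) + 8) :
    ∃ w : ℤ, sgn a b = 8 * w - a := by
  have key : (8 : ℤ) ∣ a + b ∨ (8 : ℤ) ∣ a - b := by
    have hsq : ∀ c : ℕ, c ^ 2 % 16 = (c % 8) ^ 2 % 16 := fun c ↦ by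
      conv_lhs => rw [← Nat.div_add_mod c 8]
      rw [show (8 * (c / 8) + c % 8) ^ 2 =
        (c % 8) ^ 2 + 16 * (4 * (c / 8) ^ 2 + (c / 8) * (c % 8)) by ring,
        Nat.add_mul_mod_self_left]
    have h1 := hsq a
    have h2 := hsq b
    obtain ⟨c, rfl⟩ := ha
    obtain ⟨d, rfl⟩ := hb
    rcases (by omega : (2 * c + 1) % 8 = 1 ∨ (2 * c + 1) % 8 = 3 ∨ (2 * c + 1) % 8 = 5 ∨
      (2 * c + 1) % 8 = 7) with hc | hc | hc | hc <;>
    rcases (by omega : (2 * d + 1) % 8 = 1 ∨ (2 * d + 1) % 8 = 3 ∨ (2 * d + 1) % 8 = 5 ∨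
      (2 * d + 1) % 8 = 7) with hd | hd | hd | hd <;>
    rw [hc] at h1 <;> rw [hd] at h2 <;> omega
  unfold sgn
  split_ifs with h8
  · obtain ⟨w, hw⟩ := h8
    exact ⟨w, by omega⟩
  · obtain ⟨w, hw⟩ := key.resolve_left h8
    exact ⟨w, by omega⟩

theorem sgn_eq (a b : ℕ) : sgn a b = b ∨ sgn a b = -b := by
  unfold sgn
  split_ifs <;> simp

theorem flip_eq {a b : ℕ} {w : ℤ} (hw : sgn a b = 8 * w - a) :
    flip (a, b) = ((10 * w - a).natAbs, (a - 2 * w).natAbs) := by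
  simp only [flip, hw]
  ext <;> simp only <;> congr 1 <;> omega

/-- For `j ≡ 2 (mod 4)` the map `flip` is a fixed-point-free involution of `reps j`. -/
theorem sum_reps_eq_zero (l : ℕ) : ∑ _x ∈ reps (4 * l + 2), (1 : ZMod 2) = 0 := by
  refine sum_involution (fun x _ ↦ flip x) (fun _ _ ↦ rfl) ?_ ?_ ?_
  · rintro ⟨a, b⟩ hx - heq
    obtain ⟨ha, hb, hb3, h⟩ := mem_reps.1 hx
    simp only at ha hb hb3 h
    obtain ⟨w, hw⟩ := sgn_spec ha hb h
    rw [flip_eq hw, Prod.mk.injEq] at heq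
    have hs := sgn_eq a b
    have hw₂ : w = 0 ∨ 5 * w = a := by omega
    rcases hw₂ with rfl | hw₂
    -- Here `8 * a ^ 2 = 96 * l + 56`, which is impossible modulo 32.
    · obtain rfl : a = b := by omega
      obtain ⟨c, rfl⟩ := ha
      ring_nf at h
      omega
    -- Here `sgn a b = 3 * w`, against `¬ 3 ∣ b`.
    · omega
  · rintro ⟨a, b⟩ hx
    obtain ⟨ha, hb, hb3, h⟩ := mem_reps.1 hx
    simp only at ha hb hb3 h
    obtain ⟨w, hw⟩ := sgn_spec ha hb h
    rw [flip_eq hw]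
    have hs := sgn_eq a b
    rw [mem_reps]
    refine ⟨?_, ?_, ?_, ?_⟩
    · simp only [Nat.odd_iff] at ha ⊢; omega
    · simp only [Nat.odd_iff] at ha ⊢; omega
    · simp only; omega
    · have hs2 : (8 * w - a) ^ 2 = (b : ℤ) ^ 2 := by
        rw [← hw]
        rcases hs with h | h
        · rw [h]
        · rw [h, neg_sq]
      zify at h ⊢
      rw [sq_abs, sq_abs]
      linear_combination h + 5 * hs2
  · rintro ⟨a, b⟩ hx
    obtain ⟨ha, hb, hb3, h⟩ := mem_reps.1 hx
    simp only at ha hb hb3 h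
    obtain ⟨w, hw⟩ := sgn_spec ha hb h
    have hs := sgn_eq a b
    rw [flip_eq hw]
    rw [Nat.odd_iff] at ha hb
    -- The pair of integers behind `flip (a, b)` has sum `8 * w`, so normalising the signs of
    -- its absolute values recovers it up to a common sign.
    have hnorm :
        (sgn (10 * w - a).natAbs (a - 2 * w).natAbs = a - 2 * w ∧
          (10 * w - a).natAbs = 10 * w - a) ∨
        (sgn (10 * w - a).natAbs (a - 2 * w).natAbs = -(a - 2 * w) ∧
          (10 * w - a).natAbs = -(10 * w - a)) := by
      unfold sgn
      split_ifs <;> omega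
    simp only [flip]
    ext <;> simp only <;> omega

/-! ### The two congruences -/

theorem B_zmod_five (n t α : ℕ) (hα : α ∈ ({2, 14, 18} : Finset ℕ)) :
    (B 5 (20 * t + 17) (20 * n + α) : ZMod 5) = 0 := by
  have : Fact (Nat.Prime 5) := ⟨by norm_num⟩
  rw [natCast_B]
  have hE := pentagonalSeries_mul_inv (ZMod 5)
  have hG := regularSeries_mul_pentagonalSeries (ZMod 5) (ℓ := 5) (by norm_num)
  have hp := pow_eq_expand 5 1
  simp only [pow_one] at hp
  rw [← hp] at hG
  have hG' : regularSeries (ZMod 5) 5 = pentagonalSeries (ZMod 5) ^ 4 := by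
    linear_combination (pentagonalSeries (ZMod 5))⁻¹ * hG -
      (regularSeries (ZMod 5) 5 - pentagonalSeries (ZMod 5) ^ 4) * hE
  have hpow : regularSeries (ZMod 5) 5 ^ (20 * t + 17) =
      (pentagonalSeries (ZMod 5) ^ (16 * t + 13)) ^ 5 * pentagonalSeries (ZMod 5) ^ 3 := by
    rw [hG']
    ring
  rw [hpow, hp]
  refine coeff_expand_mul_eq_zero _ _ _ fun j hj ↦ coeff_cube_zmod_five ?_
  simp only [mem_insert, mem_singleton] at hα
  unfold Nat.ModEq at hj
  omega

theorem B_zmod_two (n t α : ℕ) (hα : α ∈ ({2, 14, 18} : Finset ℕ)) :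
    (B 5 (20 * t + 17) (20 * n + α) : ZMod 2) = 0 := by
  rw [natCast_B]
  have hE := pentagonalSeries_mul_inv (ZMod 2)
  have hG := regularSeries_mul_pentagonalSeries (ZMod 2) (ℓ := 5) (by norm_num)
  have hp := pow_eq_expand 2 2
  norm_num only at hp
  set E := pentagonalSeries (ZMod 2)
  set G := regularSeries (ZMod 2) 5
  have hpow : G ^ (20 * t + 17) =
      (G ^ (5 * t + 4) * E⁻¹) ^ 4 * (expand 5 (by norm_num) E * E ^ 3) := by
    rw [← hG]
    calc G ^ (20 * t + 17) = G ^ (20 * t + 17) * (E * E⁻¹) ^ 4 := by rw [hE]; ring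
      _ = _ := by ring
  rw [hpow, hp]
  refine coeff_expand_mul_eq_zero _ _ _ fun j hj ↦ ?_
  obtain ⟨l, rfl⟩ : ∃ l, j = 4 * l + 2 := by
    refine ⟨j / 4, ?_⟩
    simp only [mem_insert, mem_singleton] at hα
    unfold Nat.ModEq at hj
    omega
  rw [coeff_eq_card_reps, sum_reps_eq_zero]

end RegularMultipartition

theorem stmt_12 (n t : ℕ) (α : ℕ) (hα : α ∈ ({2, 14, 18} : Finset ℕ)) :
    B 5 (20 * t + 17) (20 * n + α) ≡ 0 [MOD 10] := by
  have h5 := (ZMod.natCast_eq_zero_iff _ _).1 (RegularMultipartition.B_zmod_five n t α hα)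
  have h2 := (ZMod.natCast_eq_zero_iff _ _).1 (RegularMultipartition.B_zmod_two n t α hα)
  exact Nat.modEq_zero_iff_dvd.2 (Nat.Coprime.mul_dvd_of_dvd_of_dvd (by norm_num) h2 h5)
end

section
/- For all integers n ≥ 0 and t ≥ 0 and for each α ∈ {13, 34}, B_{35}^{(35t+4)}(35n + α) ≡ 0 (mod 35). -/
section Helpers

open PowerSeries PowerSeries.WithPiTopology Finset

/-! ### The generating function and its reduction modulo a prime -/

/-- The generating function of the number of `ℓ`-regular partitions, with coefficients in `R`. -/
noncomputable abbrev regGF (R : Type*) [CommSemiring R] (ℓ : ℕ) : R⟦X⟧ :=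
  PowerSeries.mk fun n ↦ (#(Nat.Partition.restricted n fun i ↦ ¬ ℓ ∣ i) : R)

/-- Only partitions of size at most `n` matter for the coefficient of `q ^ n`, so the generating
function may be replaced by a finite sum over such partitions, whose `r`-th power expands into a sum
over `r`-tuples. -/
lemma B_eq_coeff (R : Type*) [CommRing R] (ℓ r n : ℕ) :
    (B ℓ r n : R) = coeff n (regGF R ℓ ^ r) := by
  classical
  set S : R⟦X⟧ := ∑ x : (Σ a : Fin (n + 1), Nat.Partition a),
    (if ∀ part ∈ x.2.parts, ¬ ℓ ∣ part then X ^ (x.1 : ℕ) else 0) with hS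
  have h1 : X ^ (n + 1) ∣ regGF R ℓ ^ r - S ^ r := by
    refine dvd_trans ?_ (sub_dvd_pow_sub_pow _ _ r)
    rw [X_pow_dvd_iff]
    intro m hm
    rw [map_sub, sub_eq_zero, hS, map_sum, Fintype.sum_sigma]
    rw [Finset.sum_eq_single (⟨m, hm⟩ : Fin (n + 1))]
    · simp only [coeff_mk, Nat.Partition.restricted, card_filter, Nat.cast_sum]
      refine Finset.sum_congr rfl fun x _ ↦ ?_
      split_ifs <;> simp [coeff_X_pow]
    · intro b _ hb
      refine Finset.sum_eq_zero fun x _ ↦ ?_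
      have : m ≠ b := fun h ↦ hb (by ext; simp [h])
      split_ifs <;> simp [coeff_X_pow, this]
    · simp
  have h2 : coeff n (regGF R ℓ ^ r) = coeff n (S ^ r) := by
    rw [X_pow_dvd_iff] at h1
    exact sub_eq_zero.mp (by simpa using h1 n (Nat.lt_succ_self n))
  have h3 := Fintype.sum_pow (fun x : (Σ a : Fin (n + 1), Nat.Partition a) ↦
    (if ∀ part ∈ x.2.parts, ¬ ℓ ∣ part then (X : R⟦X⟧) ^ (x.1 : ℕ) else 0)) r
  rw [h2, hS, h3, map_sum, B, Fintype.card_subtype, card_filter, Nat.cast_sum]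
  refine Finset.sum_congr rfl fun f _ ↦ ?_
  by_cases hf : ∀ i, ∀ part ∈ (f i).2.parts, ¬ ℓ ∣ part
  · have : ∏ i, (if ∀ part ∈ (f i).2.parts, ¬ ℓ ∣ part then (X : R⟦X⟧) ^ ((f i).1 : ℕ) else 0)
        = X ^ (∑ i, ((f i).1 : ℕ)) := by
      rw [← Finset.prod_pow_eq_pow_sum]
      exact Finset.prod_congr rfl fun i _ ↦ if_pos (hf i)
    rw [this, coeff_X_pow]
    by_cases hsum : ∑ i, ((f i).1 : ℕ) = n
    · rw [if_pos ⟨hsum, hf⟩, if_pos hsum.symm, Nat.cast_one]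
    · rw [if_neg (fun h ↦ hsum h.1), if_neg (fun h ↦ hsum h.symm), Nat.cast_zero]
  · have : ∏ i, (if ∀ part ∈ (f i).2.parts, ¬ ℓ ∣ part then (X : R⟦X⟧) ^ ((f i).1 : ℕ) else 0)
        = 0 := by
      push Not at hf
      obtain ⟨i, hi⟩ := hf
      refine Finset.prod_eq_zero (Finset.mem_univ i) (if_neg ?_)
      push Not
      exact hi
    rw [this, if_neg (fun h ↦ hf h.2)]
    simp


/-- `regGF` is the quotient of `(q ^ ℓ; q ^ ℓ)_∞` by `(q; q)_∞`, where `pentagonalSeries R` stands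
for `(q; q)_∞`. -/
lemma regGF_mul (R : Type*) [CommRing R] [Nontrivial R] (ℓ : ℕ) (hℓ : ℓ ≠ 0) :
    regGF R ℓ * pentagonalSeries R = expand ℓ hℓ (pentagonalSeries R) := by
  let : TopologicalSpace R := ⊥
  have : DiscreteTopology R := ⟨rfl⟩
  have h1 := (Nat.Partition.hasProd_powerSeriesMk_card_restricted R (fun i ↦ ¬ ℓ ∣ i)).mul
    (hasProd_one_sub_X_pow R)
  have hc : Continuous (expand ℓ hℓ : R⟦X⟧ →ₐ[R] R⟦X⟧) := by
    rw [continuous_iff_continuousAt]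
    intro φ
    rw [ContinuousAt, tendsto_iff_coeff_tendsto]
    intro d
    simp_rw [coeff_expand]
    split_ifs
    · exact (continuous_coeff R _).continuousAt
    · exact tendsto_const_nhds
  have h2 := (hasProd_one_sub_X_pow R).map (expand ℓ hℓ) hc
  have hinj : Function.Injective fun k : ℕ ↦ ℓ * (k + 1) - 1 := by
    intro a b hab
    have ha : 0 < ℓ * (a + 1) := by positivity
    have hb : 0 < ℓ * (b + 1) := by positivity
    have : ℓ * (a + 1) = ℓ * (b + 1) := by simp only at hab; omega
    simpa [hℓ] using this
  refine h1.unique ?_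
  -- The factors with `ℓ ∤ i + 1` cancel, leaving those at `i + 1 = ℓ * (k + 1)`.
  rw [← hinj.hasProd_iff]
  · convert! h2 using 1
    ext1 k
    have hk : ℓ * (k + 1) - 1 + 1 = ℓ * (k + 1) :=
      Nat.sub_add_cancel (Nat.one_le_iff_ne_zero.mpr (by positivity))
    simp [hk, pow_mul]
  · intro i hi
    have : ¬ ℓ ∣ i + 1 := by
      rintro ⟨c, hc⟩
      obtain _ | c := c
      · simp at hc
      · exact hi ⟨c, by simp [← hc]⟩
    rw [if_pos this]
    simp_rw [pow_mul]
    exact tsum_pow_mul_one_sub_of_constantCoeff_eq_zero (by simp)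

/-- Frobenius: `φ(q ^ p) = φ(q) ^ p` over `ZMod p`. -/
lemma expand_zmod (p : ℕ) [Fact p.Prime] (φ : (ZMod p)⟦X⟧) :
    expand p (NeZero.ne p) φ = φ ^ p := by
  have := MvPowerSeries.map_frobenius_expand (p := p) (hp := NeZero.ne p) (f := φ)
  rw [ZMod.frobenius_zmod] at this
  rw [MvPowerSeries.map_id] at this
  exact this

/-- If the coefficients of `φ` vanish on a residue class modulo `p`, multiplication by a series in
`q ^ p` preserves this. -/
lemma coeff_mul_expand {R : Type*} [CommRing R] (p c : ℕ) (hp : p ≠ 0) (φ ψ : R⟦X⟧)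
    (h : ∀ m, m ≡ c [MOD p] → coeff m φ = 0) (m : ℕ) (hm : m ≡ c [MOD p]) :
    coeff m (φ * expand p hp ψ) = 0 := by
  rw [coeff_mul]
  refine Finset.sum_eq_zero fun x hx ↦ ?_
  rw [HasAntidiagonal.mem_antidiagonal] at hx
  by_cases hd : p ∣ x.2
  · rw [h, zero_mul]
    refine Nat.ModEq.trans ?_ hm
    rw [← hx, Nat.ModEq]
    obtain ⟨k, hk⟩ := hd
    simp [hk]
  · rw [coeff_expand_of_not_dvd _ _ _ hd, mul_zero]

lemma constantCoeff_pent (R : Type*) [CommRing R] : constantCoeff (pentagonalSeries R) = 1 := by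
  simpa [pentagonal] using coeff_pentagonalSeries_pentagonal R 0

/-- When `p ∣ 35` and `p ∣ r + k`, the generating function of `B 35 r` is modulo `p` the product of
`(q; q)_∞ ^ k` and a series in `q ^ p`, so vanishing of the coefficients of the former on a residue
class modulo `p` passes to `B 35 r`. -/
lemma B_cast_eq_zero (p s w k r n : ℕ) [Fact p.Prime] (hs : 35 = p * s) (hr : r + k = p * w)
    (h : ∀ m, m ≡ n [MOD p] → coeff m (pentagonalSeries (ZMod p) ^ k) = 0) :
    (B 35 r n : ZMod p) = 0 := by
  rw [B_eq_coeff]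
  set E := pentagonalSeries (ZMod p)
  have hp := NeZero.ne p
  have h0 : s ≠ 0 := by rintro rfl; simp at hs
  have h1 : regGF (ZMod p) 35 * E = expand p hp (expand s h0 E) := by
    rw [← expand_mul]
    convert regGF_mul (ZMod p) 35 (by norm_num)
    exact hs.symm
  have hu : E * E⁻¹ = 1 := PowerSeries.mul_inv_cancel _ (by simp [E, constantCoeff_pent])
  have h2 : regGF (ZMod p) 35 ^ r = E ^ k * expand p hp (expand s h0 E ^ r * E⁻¹ ^ w) := by
    calc regGF (ZMod p) 35 ^ r = regGF (ZMod p) 35 ^ r * (E * E⁻¹) ^ (p * w) := by simp [hu]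
      _ = E ^ k * ((regGF (ZMod p) 35 * E) ^ r * (E⁻¹ ^ w) ^ p) := by
        rw [mul_pow, mul_pow, ← hr]
        have : (E⁻¹ ^ w) ^ p = E⁻¹ ^ (r + k) := by rw [hr, ← pow_mul, mul_comm]
        rw [this, pow_add]; ring
      _ = _ := by rw [h1, map_mul, map_pow, expand_zmod p (E⁻¹ ^ w)]
  rw [h2]
  exact coeff_mul_expand p n hp _ _ h n rfl

/-! ### A finite form of Jacobi's identity -/

/-- The finite `q`-Pochhammer symbol `(q; q)_n = ∏_{i=1}^{n} (1 - q ^ i)`, with `q = X`. -/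
noncomputable def poch (K : Type*) [Field K] (n : ℕ) : K⟦X⟧ := ∏ i ∈ range n, (1 - X ^ (i + 1))

/-- The Gaussian binomial `[a + b choose a]_q` as a power series in `q = X`. Indexing by the pair
`(a, b)` avoids truncated subtraction in the Pascal rule. -/
noncomputable def gauss (K : Type*) [Field K] (a b : ℕ) : K⟦X⟧ :=
  poch K (a + b) * (poch K a)⁻¹ * (poch K b)⁻¹

/-- The Gauss polynomial `∏_{j < N} (Y - q ^ j)` in `Y`, whose coefficients are, up to signs and
powers of `q`, the Gaussian binomials `[N choose a]_q`. -/
noncomputable def gaussPoly (K : Type*) [Field K] (N : ℕ) : Polynomial K⟦X⟧ :=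
  ∏ j ∈ range N, (Polynomial.X - Polynomial.C (X ^ j))

section Jacobi
variable (K : Type*) [Field K]

lemma poch_succ (n : ℕ) : poch K (n + 1) = poch K n * (1 - X ^ (n + 1)) := by
  simp [poch, prod_range_succ]

lemma poch_mul_inv (n : ℕ) : poch K n * (poch K n)⁻¹ = 1 := by
  refine PowerSeries.mul_inv_cancel _ ?_
  simp [poch, map_prod]

lemma poch_inv (n : ℕ) : (poch K n)⁻¹ = (1 - X ^ (n + 1)) * (poch K (n + 1))⁻¹ := by
  have h1 := poch_mul_inv K n
  have h2 := poch_mul_inv K (n + 1)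
  rw [poch_succ] at h2 ⊢
  linear_combination (-(poch K n)⁻¹) * h2 +
    ((1 - X ^ (n + 1)) * (poch K n * (1 - X ^ (n + 1)))⁻¹) * h1

lemma gauss_zero_left (b : ℕ) : gauss K 0 b = 1 := by
  have h0 : poch K 0 = 1 := by simp [poch]
  have h1 := poch_mul_inv K 0
  rw [h0, one_mul] at h1
  rw [gauss, zero_add, h0, h1, mul_one, poch_mul_inv]

lemma gauss_zero_right (a : ℕ) : gauss K a 0 = 1 := by
  have h := gauss_zero_left K a
  rw [gauss, zero_add] at h
  rw [gauss, add_zero, ← h]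
  ring

/-- The `q`-Pascal rule. -/
lemma gauss_succ_succ (a b : ℕ) :
    gauss K (a + 1) (b + 1) = gauss K (a + 1) b + X ^ (b + 1) * gauss K a (b + 1) := by
  have e1 : a + 1 + (b + 1) = (a + b + 1) + 1 := by ring
  have e2 : a + 1 + b = a + b + 1 := by ring
  have e3 : a + (b + 1) = a + b + 1 := by ring
  rw [gauss, gauss, gauss, e1, e2, e3, poch_succ K (a + b + 1), poch_inv K a, poch_inv K b]
  ring

lemma gaussPoly_natDegree (N : ℕ) : (gaussPoly K N).natDegree = N := by
  rw [gaussPoly, Polynomial.natDegree_prod_of_monic _ _ fun _ _ ↦ Polynomial.monic_X_sub_C _]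
  simp only [Polynomial.natDegree_X_sub_C, sum_const, card_range, smul_eq_mul, mul_one]

lemma choose_two_succ (a : ℕ) : (a + 1).choose 2 = a + a.choose 2 := by
  rw [Nat.choose_succ_succ' a 1, Nat.choose_one_right]

/-- The `q`-binomial theorem. -/
lemma gaussPoly_coeff (N : ℕ) : ∀ a b : ℕ, a + b = N →
    (gaussPoly K N).coeff b = (-1) ^ a * X ^ (a.choose 2) * gauss K a b := by
  induction N with
  | zero =>
    intro a b h
    obtain ⟨rfl, rfl⟩ : a = 0 ∧ b = 0 := by omega
    simp [gaussPoly, gauss_zero_left]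
  | succ N ih =>
    intro a b h
    have hs : gaussPoly K (N + 1) =
        gaussPoly K N * (Polynomial.X - Polynomial.C (X ^ N)) := by
      simp [gaussPoly, prod_range_succ]
    rw [hs]
    obtain _ | b := b
    · obtain rfl : a = N + 1 := by omega
      rw [Polynomial.mul_coeff_zero, ih N 0 (by omega), gauss_zero_right, gauss_zero_right,
        choose_two_succ, Polynomial.coeff_sub, Polynomial.coeff_X_zero, Polynomial.coeff_C_zero]
      ring
    · rw [Polynomial.coeff_mul_X_sub_C]
      obtain _ | a := a
      · rw [ih 0 b (by omega), Polynomial.coeff_eq_zero_of_natDegree_lt, gauss_zero_left,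
          gauss_zero_left]
        · simp
        · rw [gaussPoly_natDegree]; omega
      · rw [ih (a + 1) b (by omega), ih a (b + 1) (by omega), gauss_succ_succ, choose_two_succ]
        obtain rfl : N = a + b + 1 := by omega
        ring

/-- `q ^ n` is the middle root of `∏_{j ≤ 2n} (Y - q ^ j)`, so the derivative there is the product
of the remaining factors, which splits into two copies of `(q; q)_n`. -/
lemma derivative_eval_gaussPoly (n : ℕ) :
    (gaussPoly K (2 * n + 1)).derivative.eval (X ^ n) =
      (-1) ^ n * X ^ (n.choose 2 + n * n) * poch K n ^ 2 := by
  have h1 : gaussPoly K (2 * n + 1) = (Polynomial.X - Polynomial.C (X ^ n)) *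
      ((∏ j ∈ range n, (Polynomial.X - Polynomial.C (X ^ j))) *
        ∏ j ∈ range n, (Polynomial.X - Polynomial.C (X ^ (n + 1 + j)))) := by
    rw [gaussPoly, show 2 * n + 1 = (n + 1) + n by ring, prod_range_add, prod_range_succ]
    ring
  rw [h1, Polynomial.derivative_mul]
  simp only [Polynomial.derivative_sub, Polynomial.derivative_X, Polynomial.derivative_C, sub_zero,
    one_mul, Polynomial.eval_add, Polynomial.eval_mul, Polynomial.eval_sub, Polynomial.eval_X,
    Polynomial.eval_C, sub_self, zero_mul, add_zero, Polynomial.eval_prod]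
  have h2 : ∏ j ∈ range n, ((X : K⟦X⟧) ^ n - X ^ j) =
      (-1) ^ n * X ^ (n.choose 2) * poch K n := by
    have : poch K n = ∏ j ∈ range n, (1 - (X : K⟦X⟧) ^ (n - j)) := by
      rw [poch, ← prod_range_reflect]
      refine prod_congr rfl fun j hj ↦ ?_
      rw [mem_range] at hj
      congr 2; omega
    have hc : n.choose 2 = ∑ j ∈ range n, j := by rw [sum_range_id, Nat.choose_two_right]
    rw [this, hc, ← prod_pow_eq_pow_sum,
      show ((-1 : K⟦X⟧)) ^ n = ∏ j ∈ range n, (-1) by simp, ← prod_mul_distrib, ← prod_mul_distrib]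
    refine prod_congr rfl fun j hj ↦ ?_
    rw [mem_range] at hj
    have : (X : K⟦X⟧) ^ n = X ^ j * X ^ (n - j) := by rw [← pow_add]; congr 1; omega
    rw [this]; ring
  have h3 : ∏ j ∈ range n, ((X : K⟦X⟧) ^ n - X ^ (n + 1 + j)) = X ^ (n * n) * poch K n := by
    rw [poch, pow_mul, show ((X : K⟦X⟧) ^ n) ^ n = ∏ j ∈ range n, X ^ n by simp,
      ← prod_mul_distrib]
    refine prod_congr rfl fun j _ ↦ by ring
  rw [h2, h3]
  ring

/-- The triangular number `(n + 1 - b)(n - b) / 2`. At most one of the two summands is nonzero, by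
truncated subtraction: the first for `b ≤ n`, the second for `b > n`. -/
def triExp (n b : ℕ) : ℕ := (n + 1 - b).choose 2 + (b - n).choose 2

lemma triExp_le {n b : ℕ} (h : b ≤ n) : triExp n b = (n - b + 1).choose 2 := by
  rw [triExp, Nat.sub_eq_zero_of_le h, Nat.sub_add_comm h]; simp

lemma triExp_gt {n b : ℕ} (h : n < b) : triExp n b = (b - n).choose 2 := by
  rw [triExp, Nat.sub_eq_zero_of_le h]; simp

lemma two_mul_triExp (n b : ℕ) : (2 * triExp n b : ℤ) = (n + 1 - b) * (n - b) := by
  have : (2 * triExp n b : ℚ) = (n + 1 - b) * (n - b) := by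
    rcases le_or_gt b n with h | h
    · rw [triExp_le h, Nat.cast_choose_two]
      push_cast [h]
      ring
    · rw [triExp_gt h, Nat.cast_choose_two]
      push_cast [h.le]
      ring
  exact_mod_cast this

lemma triExp_exponent {n a b : ℕ} (h : a + (b + 1) = 2 * n + 1) :
    a.choose 2 + n * b = n.choose 2 + n * n + triExp n (b + 1) := by
  have h1 := two_mul_triExp n (b + 1)
  have h2 : (2 * triExp n (b + 1) : ℚ) = (n + 1 - (b + 1)) * (n - (b + 1)) := by exact_mod_cast h1
  have h3 : (a : ℚ) = 2 * n - b := by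
    have : (a : ℚ) + (b + 1) = 2 * n + 1 := by exact_mod_cast h
    linarith
  have : ((a.choose 2 + n * b : ℕ) : ℚ) = (n.choose 2 + n * n + triExp n (b + 1) : ℕ) := by
    push_cast
    rw [Nat.cast_choose_two, Nat.cast_choose_two, h3]
    linear_combination -h2 / 2
  exact_mod_cast this

/-- A finite form of Jacobi's identity, obtained by differentiating the `q`-binomial theorem at
`Y = q ^ n`. Grouping the terms `b` and `2n + 1 - b` would turn the weights `b` into the odd numbers
of the usual formulation. -/
lemma finite_jacobi (n : ℕ) :
    ∑ b ∈ range (2 * n + 2), (b : K⟦X⟧) * (-1) ^ (2 * n + 1 - b) * X ^ triExp n b *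
      gauss K (2 * n + 1 - b) b = (-1) ^ n * poch K n ^ 2 := by
  have h := derivative_eval_gaussPoly K n
  rw [Polynomial.derivative_eval, Polynomial.sum_over_range _ (by simp), gaussPoly_natDegree] at h
  -- The lowest power of `q` on both sides is cancelled; the terms match for `b ≥ 1` by
  -- `triExp_exponent`, while for `b = 0` both vanish because of the weight `b`.
  have hX : (X : K⟦X⟧) ^ (n.choose 2 + n * n) ≠ 0 := pow_ne_zero _ X_ne_zero
  refine mul_left_cancel₀ hX ?_
  rw [mul_sum]
  rw [show X ^ (n.choose 2 + n * n) * ((-1) ^ n * poch K n ^ 2) =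
    (-1) ^ n * X ^ (n.choose 2 + n * n) * poch K n ^ 2 by ring, ← h]
  refine sum_congr rfl fun b hb ↦ ?_
  rw [mem_range] at hb
  obtain _ | b := b
  · simp
  · have hab : 2 * n + 1 - (b + 1) + (b + 1) = 2 * n + 1 := by omega
    rw [gaussPoly_coeff K _ _ _ hab, Nat.add_sub_cancel, ← pow_mul]
    have := congrArg (fun e ↦ (X : K⟦X⟧) ^ e) (triExp_exponent hab)
    simp only [pow_add _ (n.choose 2 + n * n), pow_add _ (Nat.choose _ 2) (n * b)] at this
    linear_combination (-((b + 1 : ℕ) : K⟦X⟧) * (-1) ^ (2 * n + 1 - (b + 1)) *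
      gauss K (2 * n + 1 - (b + 1)) (b + 1)) * this

/-- Euler's infinite product `(q; q)_∞`, which is `pentagonalSeries K` by the pentagonal number
theorem, agrees with `(q; q)_L` up to the term `q ^ L`. -/
lemma pent_sub_poch (L : ℕ) : X ^ (L + 1) ∣ pentagonalSeries K - poch K L := by
  rw [X_pow_dvd_iff]
  intro m hm
  obtain ⟨s, hs1, hs2⟩ := ((coeff_prod_one_sub_X_pow_eventually_eq K m).and
    (Filter.eventually_ge_atTop (range L))).exists
  have hs2 : range L ⊆ s := hs2
  have key : X ^ (L + 1) ∣ ∏ i ∈ s \ range L, (1 - (X : K⟦X⟧) ^ (i + 1)) - 1 := by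
    refine prod_induction _ (fun g ↦ (X : K⟦X⟧) ^ (L + 1) ∣ g - 1) ?_ (by simp) ?_
    · intro a b ha hb
      rw [show a * b - 1 = (a - 1) * b + (b - 1) by ring]
      exact dvd_add (ha.mul_right b) hb
    · intro i hi
      rw [mem_sdiff, mem_range, not_lt] at hi
      rw [show (1 - (X : K⟦X⟧) ^ (i + 1)) - 1 = -X ^ (i + 1) by ring, dvd_neg]
      exact pow_dvd_pow _ (by omega)
  have h2 : X ^ (L + 1) ∣ ∏ i ∈ s, (1 - (X : K⟦X⟧) ^ (i + 1)) - poch K L := by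
    rw [← prod_sdiff hs2, poch]
    convert! key.mul_right (∏ i ∈ range L, (1 - (X : K⟦X⟧) ^ (i + 1))) using 1
    ring
  rw [map_sub, ← hs1, ← map_sub]
  exact X_pow_dvd_iff.mp h2 m hm

lemma pent_mul_gauss (a b c : ℕ) (ha : c ≤ a) (hb : c ≤ b) :
    X ^ (c + 1) ∣ pentagonalSeries K * gauss K a b - 1 := by
  set E := pentagonalSeries K
  have hE : ∀ L, c ≤ L → X ^ (c + 1) ∣ E - poch K L := fun L hL ↦
    (pow_dvd_pow _ (by omega)).trans (pent_sub_poch K L)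
  have e : E * gauss K a b - 1 = (poch K a)⁻¹ * (poch K b)⁻¹ *
      ((E - poch K a) * poch K (a + b) +
        poch K a * ((E - poch K b) - (E - poch K (a + b)))) := by
    rw [gauss]
    linear_combination (1 : K⟦X⟧) * poch_mul_inv K a +
      (poch K a * (poch K a)⁻¹) * poch_mul_inv K b
  rw [e]
  refine Dvd.dvd.mul_left (dvd_add ((hE a ha).mul_right _) (Dvd.dvd.mul_left ?_ _)) _
  exact dvd_sub (hE b hb) (hE (a + b) (by omega))

lemma le_choose_two (d : ℕ) : d ≤ d.choose 2 + 2 := by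
  induction d with
  | zero => simp
  | succ d ih =>
    rw [choose_two_succ]
    rcases d with _ | _ | d
    · simp
    · simp
    · omega

/-- Jacobi's identity for the cube of Euler's product, modulo `q ^ n`. A Gaussian binomial in
`finite_jacobi` agrees with `1 / (q; q)_∞` only to low order when `b` is far from the middle, but
there the factor `q ^ triExp n b` makes up for the loss. -/
lemma jacobi_approx (n : ℕ) :
    X ^ n ∣ pentagonalSeries K ^ 3 - ∑ b ∈ range (2 * n + 2),
      (b : K⟦X⟧) * (-1) ^ (2 * n + 1 - b) * (-1) ^ n * X ^ triExp n b := by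
  set E := pentagonalSeries K
  have hsq : ((-1 : K⟦X⟧) ^ n) * (-1) ^ n = 1 := by rw [← mul_pow]; simp
  have h1 : X ^ n ∣ E ^ 3 - E * poch K n ^ 2 := by
    rw [show E ^ 3 - E * poch K n ^ 2 = (E - poch K n) * (E * (E + poch K n)) by ring]
    exact ((pow_dvd_pow _ (Nat.le_succ n)).trans (pent_sub_poch K n)).mul_right _
  have h2 : E * poch K n ^ 2 = ∑ b ∈ range (2 * n + 2),
      (b : K⟦X⟧) * (-1) ^ (2 * n + 1 - b) * (-1) ^ n * X ^ triExp n b *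
      (E * gauss K (2 * n + 1 - b) b) := by
    calc E * poch K n ^ 2 = E * (-1) ^ n * ((-1) ^ n * poch K n ^ 2) := by
          linear_combination (-E * poch K n ^ 2) * hsq
      _ = _ := by
          rw [← finite_jacobi, mul_sum]
          exact sum_congr rfl fun b _ ↦ by ring
  rw [← sub_add_sub_cancel _ (E * poch K n ^ 2)]
  refine dvd_add h1 ?_
  rw [h2, ← sum_sub_distrib]
  refine dvd_sum fun b hb ↦ ?_
  rw [mem_range] at hb
  rw [← mul_sub_one, mul_assoc]
  refine Dvd.dvd.mul_left ?_ _
  rcases le_or_gt b n with h | h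
  · have := mul_dvd_mul (dvd_refl ((X : K⟦X⟧) ^ triExp n b))
      (pent_mul_gauss K (2 * n + 1 - b) b b (by omega) le_rfl)
    rw [← pow_add] at this
    refine (pow_dvd_pow _ ?_).trans this
    rw [triExp_le h]
    have := le_choose_two (n - b + 1)
    omega
  · have := mul_dvd_mul (dvd_refl ((X : K⟦X⟧) ^ triExp n b))
      (pent_mul_gauss K (2 * n + 1 - b) b (2 * n + 1 - b) le_rfl (by omega))
    rw [← pow_add] at this
    refine (pow_dvd_pow _ ?_).trans this
    rw [triExp_gt h]
    have := le_choose_two (b - n)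
    omega

end Jacobi

/-! ### Vanishing coefficients modulo 5 and 7 -/

/-- Pentagonal numbers are `0`, `1` or `2` modulo `5`. -/
lemma coeff_pent_mod_five (m : ℕ) (h : m % 5 = 3 ∨ m % 5 = 4) :
    coeff m (pentagonalSeries (ZMod 5) ^ 1) = 0 := by
  rw [pow_one]
  refine coeff_pentagonalSeries_eq_zero _ ?_
  rintro ⟨k, rfl⟩
  have h1 := two_mul_natCast_pentagonal k
  have h2 : (k * (3 * k - 1)) % 5 = 0 ∨ (k * (3 * k - 1)) % 5 = 2 ∨ (k * (3 * k - 1)) % 5 = 4 := by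
    have : k % 5 = 0 ∨ k % 5 = 1 ∨ k % 5 = 2 ∨ k % 5 = 3 ∨ k % 5 = 4 := by omega
    rcases this with h | h | h | h | h <;> simp [Int.mul_emod, Int.sub_emod, h]
  omega

/-- Every term of Jacobi's series whose exponent is `6` modulo `7` has weight divisible by `7`. -/
lemma coeff_pent_pow_three_mod_seven (m : ℕ) (h : m % 7 = 6) : coeff m (pentagonalSeries (ZMod 7) ^ 3) = 0 := by
  have h5 : ∀ x : ZMod 7, 2 * 6 = (0 * 6 + 3 + 1 - x) * (0 * 6 + 3 - x) → x = 0 := by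
    decide
  have : Fact (Nat.Prime 7) := ⟨by norm_num⟩
  -- With `n ≡ 3 [MOD 7]` the congruence `2 * triExp n b ≡ 12` reads `b ^ 2 ≡ 0`, so that the weight
  -- `b` itself vanishes and no grouping of terms is needed; `n > m` makes the truncation harmless.
  have h1 := X_pow_dvd_iff.mp (jacobi_approx (ZMod 7) (7 * m + 3)) m (by omega)
  rw [map_sub, sub_eq_zero] at h1
  rw [h1, map_sum]
  refine sum_eq_zero fun b _ ↦ ?_
  rcases eq_or_ne m (triExp (7 * m + 3) b) with hm | hm
  · have hb : (b : (ZMod 7)⟦X⟧) = 0 := by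
      have h2 := two_mul_triExp (7 * m + 3) b
      rw [← hm] at h2
      have h3 := congrArg (Int.cast : ℤ → ZMod 7) h2
      have h4 : (m : ZMod 7) = 6 := by
        rw [← Nat.mod_add_div m 7, h]; push_cast; rw [show (7 : ZMod 7) = 0 from rfl]; simp
      push_cast at h3
      rw [h4, show (7 : ZMod 7) = 0 from rfl] at h3
      rw [← map_natCast (C : ZMod 7 →+* _), h5 _ h3, map_zero]
    simp [hb]
  · have e : ∀ k l : ℕ, (b : (ZMod 7)⟦X⟧) * (-1) ^ k * (-1) ^ l =
        C ((b : ZMod 7) * (-1) ^ k * (-1) ^ l) := by intro k l; simp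
    rw [e, coeff_C_mul_X_pow, if_neg hm]

end Helpers

theorem stmt_13 (n t : ℕ) (α : ℕ) (hα : α ∈ ({13, 34} : Finset ℕ)) :
    B 35 (35 * t + 4) (35 * n + α) ≡ 0 [MOD 35] := by
  have hα' : α = 13 ∨ α = 34 := by simpa using hα
  have : Fact (Nat.Prime 5) := ⟨by norm_num⟩
  have : Fact (Nat.Prime 7) := ⟨by norm_num⟩
  have h5 : 5 ∣ B 35 (35 * t + 4) (35 * n + α) := by
    rw [← ZMod.natCast_eq_zero_iff]
    refine B_cast_eq_zero 5 7 (7 * t + 1) 1 _ _ rfl (by ring) fun m hm ↦ coeff_pent_mod_five m ?_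
    rw [Nat.ModEq] at hm
    omega
  have h7 : 7 ∣ B 35 (35 * t + 4) (35 * n + α) := by
    rw [← ZMod.natCast_eq_zero_iff]
    refine B_cast_eq_zero 7 5 (5 * t + 1) 3 _ _ rfl (by ring) fun m hm ↦ coeff_pent_pow_three_mod_seven m ?_
    rw [Nat.ModEq] at hm
    omega
  exact (Nat.modEq_zero_iff_dvd).mpr (Nat.Coprime.mul_dvd_of_dvd_of_dvd (by norm_num) h5 h7)
end

section
/- For all integers n ≥ 0 and t ≥ 0 and for each α ∈ {3, 4, 13, 18, 24, 34}, B_{35}^{(35t+34)}(35n + α) ≡ 0 (mod 35). -/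
open PowerSeries

/-- The generating function of the partitions with no part divisible by `ℓ`. -/
noncomputable def regularSeries (R : Type*) [CommSemiring R] (ℓ : ℕ) : R⟦X⟧ :=
  PowerSeries.mk fun n ↦ ((Nat.Partition.restricted n (¬ ℓ ∣ ·)).card : R)

/-- The truncation of the generating function of regular partitions is the sum of `X ^ |λ|` over the
type of partitions of size at most `n` that occurs in the definition of `B`. -/
lemma trunc_regularSeries (R : Type*) [CommSemiring R] (ℓ n : ℕ) :
    trunc (n + 1) (regularSeries R ℓ) =
      ∑ s : (Σ a : Fin (n + 1), Nat.Partition a),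
        if ∀ part ∈ s.2.parts, ¬ ℓ ∣ part then (Polynomial.X : Polynomial R) ^ (s.1 : ℕ) else 0 := by
  rw [Fintype.sum_sigma, trunc_apply, ← Finset.range_eq_Ico, Finset.sum_range]
  refine Finset.sum_congr rfl fun a _ ↦ ?_
  dsimp only
  rw [← Finset.sum_filter, Finset.sum_const, regularSeries, coeff_mk,
    ← Polynomial.C_mul_X_pow_eq_monomial, nsmul_eq_mul, map_natCast]
  rfl

lemma natCast_B (R : Type*) [CommSemiring R] (ℓ r n : ℕ) :
    (B ℓ r n : R) = coeff n (regularSeries R ℓ ^ r) := by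
  classical
  rw [← coeff_coe_trunc_of_lt n.lt_succ_self, ← trunc_trunc_pow,
    coeff_coe_trunc_of_lt n.lt_succ_self, ← Polynomial.coe_pow, Polynomial.coeff_coe,
    trunc_regularSeries, ← Fin.prod_const, Finset.prod_univ_sum, Polynomial.finsetSum_coeff,
    B, Fintype.card_subtype, Finset.card_filter, Fintype.piFinset_univ, Nat.cast_sum]
  refine Finset.sum_congr rfl fun f _ ↦ ?_
  by_cases h : ∀ i, ∀ part ∈ (f i).2.parts, ¬ ℓ ∣ part
  · rw [Finset.prod_congr rfl fun i _ ↦ if_pos (h i), Finset.prod_pow_eq_pow_sum,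
      Polynomial.coeff_X_pow]
    rw [Nat.cast_ite, Nat.cast_one, Nat.cast_zero]
    exact if_congr ⟨fun h' ↦ h'.1.symm, fun h' ↦ ⟨h'.symm, h⟩⟩ rfl rfl
  · rw [if_neg fun h' ↦ h h'.2]
    obtain ⟨i, hi⟩ := not_forall.mp h
    rw [Finset.prod_eq_zero (Finset.mem_univ i) (if_neg hi)]
    simp

/-- Euler's product times the generating function of `p * k`-regular partitions is
`∏ (1 - X ^ (p k m))`, which is the `p`-th power of `∏ (1 - X ^ (k m))` in characteristic `p`. -/
lemma exists_pow_eq (p k : ℕ) [hp : Fact p.Prime] (hk : 0 < k) :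
    ∃ G : (ZMod p)⟦X⟧, regularSeries (ZMod p) (p * k) * pentagonalSeries (ZMod p) = G ^ p := by
  open scoped PowerSeries.WithPiTopology in
  let _ : TopologicalSpace (ZMod p) := ⊥
  have _ : DiscreteTopology (ZMod p) := ⟨rfl⟩
  have hm : Multipliable fun i : ℕ ↦ (1 : (ZMod p)⟦X⟧) - X ^ ((i + 1) * k) := by
    simp_rw [sub_eq_add_neg]
    apply WithPiTopology.multipliable_one_add_of_tendsto_order_atTop_nhds_top
    refine ENat.tendsto_nhds_top_iff_natCast_lt.mpr
      (fun n ↦ Filter.eventually_atTop.mpr ⟨n, fun m hm ↦ ?_⟩)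
    rw [order_neg, order_X_pow]
    norm_cast
    nlinarith
  have h := (Nat.Partition.hasProd_powerSeriesMk_card_countRestricted (ZMod p)
    (Nat.mul_pos hp.out.pos hk)).mul (WithPiTopology.hasProd_one_sub_X_pow (ZMod p))
  rw [← Nat.Partition.powerSeriesMk_card_restricted_eq_powerSeriesMk_card_countRestricted _
    (Nat.mul_pos hp.out.pos hk)] at h
  refine ⟨∏' i : ℕ, (1 - X ^ ((i + 1) * k)), h.unique ?_⟩
  rw [← hm.tprod_pow]
  refine HasProd.congr_fun (hm.pow p).hasProd fun i ↦ ?_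
  have : CharP (ZMod p)⟦X⟧ p := charP_of_injective_algebraMap C_injective p
  simp_rw [pow_mul X (i + 1)]
  rw [geom_sum_mul_neg, sub_pow_char, one_pow, ← pow_mul, ← pow_mul, ← pow_mul]
  ring_nf

lemma coeff_pow_char_eq_zero (p : ℕ) [Fact p.Prime] (f : (ZMod p)⟦X⟧) {m : ℕ} (hm : ¬ p ∣ m) :
    coeff m (f ^ p) = 0 := by
  rw [← coeff_coe_trunc_of_lt m.lt_succ_self, ← trunc_trunc_pow,
    coeff_coe_trunc_of_lt m.lt_succ_self, ← Polynomial.coe_pow, Polynomial.coeff_coe,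
    ← ZMod.expand_card, Polynomial.coeff_expand (Fact.out : p.Prime).pos, if_neg hm]

lemma natCast_B_eq_zero (p k : ℕ) [hp : Fact p.Prime] (hk : 0 < k) (t n : ℕ)
    (hn : ∀ j : ℤ, ¬ n ≡ pentagonal j [MOD p]) :
    (B (p * k) (p * k * t + (p * k - 1)) n : ZMod p) = 0 := by
  obtain ⟨G, hG⟩ := exists_pow_eq p k hk
  rw [natCast_B]
  set P := regularSeries (ZMod p) (p * k)
  set E := pentagonalSeries (ZMod p)
  have hP : constantCoeff P = 1 := by
    rw [← coeff_zero_eq_constantCoeff_apply, show P = PowerSeries.mk _ from rfl, coeff_mk]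
    simp [Nat.Partition.restricted]
  have hE : constantCoeff E = 1 := by
    have := coeff_pentagonalSeries_pentagonal (ZMod p) 0
    simpa [pentagonal_def] using this
  have hG0 : constantCoeff G ≠ 0 := by
    intro h0
    have := congrArg constantCoeff hG
    rw [map_mul, map_pow, hP, hE, h0, zero_pow hp.out.ne_zero, one_mul] at this
    exact one_ne_zero this
  have key : P ^ (p * k * t + (p * k - 1)) = (P ^ (k * (t + 1)) * G⁻¹) ^ p * E := by
    have hpk : 1 ≤ p * k := Nat.mul_pos hp.out.pos hk
    have hexp : p * k * t + (p * k - 1) + 1 = k * (t + 1) * p := by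
      rw [add_assoc, Nat.sub_add_cancel hpk]; ring
    calc P ^ (p * k * t + (p * k - 1))
        = P ^ (p * k * t + (p * k - 1)) * (G * G⁻¹) ^ p := by
          rw [PowerSeries.mul_inv_cancel G hG0, one_pow, mul_one]
      _ = P ^ (p * k * t + (p * k - 1) + 1) * G⁻¹ ^ p * E := by
          rw [mul_pow G, ← hG]; ring
      _ = _ := by rw [hexp, pow_mul, mul_pow]
  rw [key, coeff_mul]
  refine Finset.sum_eq_zero fun ⟨a, b⟩ hab ↦ ?_
  rw [Finset.HasAntidiagonal.mem_antidiagonal] at hab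
  by_cases ha : p ∣ a
  · rw [coeff_pentagonalSeries_eq_zero, mul_zero]
    rintro ⟨j, hj⟩
    apply hn j
    obtain ⟨c, rfl⟩ := ha
    simp only at hab hj
    rw [← hab, hj]
    simp [Nat.ModEq]
  · rw [coeff_pow_char_eq_zero p _ ha, zero_mul]

lemma pentagonal_mod_five (j : ℤ) : pentagonal j % 5 ≠ 3 ∧ pentagonal j % 5 ≠ 4 := by
  have h := congrArg (Int.cast : ℤ → ZMod 5) (two_mul_natCast_pentagonal j)
  push_cast at h
  have key : ∀ x y : ZMod 5, 2 * x = y * (3 * y - 1) → x ≠ 3 ∧ x ≠ 4 := by decide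
  obtain ⟨h1, h2⟩ := key _ _ h
  exact ⟨fun e ↦ h1 ((ZMod.natCast_eq_natCast_iff _ 3 5).mpr e),
    fun e ↦ h2 ((ZMod.natCast_eq_natCast_iff _ 4 5).mpr e)⟩

lemma pentagonal_mod_seven (j : ℤ) :
    pentagonal j % 7 ≠ 3 ∧ pentagonal j % 7 ≠ 4 ∧ pentagonal j % 7 ≠ 6 := by
  have h := congrArg (Int.cast : ℤ → ZMod 7) (two_mul_natCast_pentagonal j)
  push_cast at h
  have key : ∀ x y : ZMod 7, 2 * x = y * (3 * y - 1) → x ≠ 3 ∧ x ≠ 4 ∧ x ≠ 6 := by decide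
  obtain ⟨h1, h2, h3⟩ := key _ _ h
  exact ⟨fun e ↦ h1 ((ZMod.natCast_eq_natCast_iff _ 3 7).mpr e),
    fun e ↦ h2 ((ZMod.natCast_eq_natCast_iff _ 4 7).mpr e),
    fun e ↦ h3 ((ZMod.natCast_eq_natCast_iff _ 6 7).mpr e)⟩

theorem stmt_16 (n t : ℕ) (α : ℕ)
    (hα : α ∈ ({3, 4, 13, 18, 24, 34} : Finset ℕ)) :
    B 35 (35 * t + 34) (35 * n + α) ≡ 0 [MOD 35] := by
  simp only [Finset.mem_insert, Finset.mem_singleton] at hα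
  have : Fact (Nat.Prime 5) := ⟨by norm_num⟩
  have : Fact (Nat.Prime 7) := ⟨by norm_num⟩
  have h5 : 5 ∣ B 35 (35 * t + 34) (35 * n + α) := by
    rw [← ZMod.natCast_eq_zero_iff]
    refine natCast_B_eq_zero 5 7 (by norm_num) t _ fun j hj ↦ ?_
    have := pentagonal_mod_five j
    unfold Nat.ModEq at hj
    omega
  have h7 : 7 ∣ B 35 (35 * t + 34) (35 * n + α) := by
    rw [← ZMod.natCast_eq_zero_iff]
    refine natCast_B_eq_zero 7 5 (by norm_num) t _ fun j hj ↦ ?_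
    have := pentagonal_mod_seven j
    unfold Nat.ModEq at hj
    omega
  rw [Nat.modEq_zero_iff_dvd]
  exact Nat.Coprime.mul_dvd_of_dvd_of_dvd (by norm_num : Nat.Coprime 5 7) h5 h7
end
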